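/- arXiv:math/9905116 — 2 statements merged into one kernel-verified Lean document; each statement's English description precedes it below -/
import Mathlib

section
/- Assume ◊: there exists a sequence (A_α)_{α<ω₁} with A_α ⊆ α for each α, such that for every B ⊆ ω₁ the set {α < ω₁ : B ∩ α = A_α} is stationary in ω₁ (i.e., meets every closed unbounded subset of ω₁). Then there exists a set X ⊆ 2^ω of cardinality ℵ₁ such that every subset of X is a γ-set (in the subspace topology) and X is not strongly meager; indeed there is a measure-zero set G ⊆ 2^ω with X + G = 2^ω. -/
open Set MeasureTheory Filter Pointwise
open scoped ENNReal

/-- The Cantor space `2^ω`: functions `ω → {0,1}` with the product topology and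
coordinatewise addition mod 2 (via `ZMod 2`). -/
abbrev Cantor : Type := ℕ → ZMod 2

/-- `μ` is the product measure on `2^ω` giving each coordinate the uniform measure:
every cylinder prescribing the coordinates in a finite set `s` has measure `2^{-|s|}`.
(This property characterizes the product measure uniquely.) -/
def IsCantorProductMeasure (μ : Measure Cantor) : Prop :=
  ∀ (s : Finset ℕ) (f : ℕ → ZMod 2),
    μ {x : Cantor | ∀ i ∈ s, x i = f i} = (2 : ENNReal)⁻¹ ^ s.card

/-- A family `J` of subsets is an ω-cover of `X` if every finite subset of `X`
is contained in some member of `J`. -/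
def IsOmegaCover {α : Type*} (J : Set (Set α)) (X : Set α) : Prop :=
  ∀ F : Finset α, ↑F ⊆ X → ∃ U ∈ J, ↑F ⊆ U

/-- `X` is a γ-set (equivalently: `X` with the subspace topology is a γ-space):
for every ω-cover `J` of `X` by open subsets of the ambient space there is a sequence
`D n ∈ J` with `X ⊆ ⋃_m ⋂_{n>m} D n`. -/
def IsGammaSet {α : Type*} [TopologicalSpace α] (X : Set α) : Prop :=
  ∀ J : Set (Set α), (∀ U ∈ J, IsOpen U) → IsOmegaCover J X →
    ∃ D : ℕ → Set α, (∀ n, D n ∈ J) ∧ X ⊆ ⋃ m, ⋂ n > m, D n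

/-- The blocks endpoints `k_n = Σ_{i=0}^n 2^i = 2^{n+1} - 1`. -/
def kseq (n : ℕ) : ℕ := 2 ^ (n + 1) - 1

/-- `A_n = {x ∈ 2^ω : x ↾ [k_n, k_{n+1}) = 0}`. -/
def Aset (n : ℕ) : Set Cantor := {x | ∀ i ∈ Set.Ico (kseq n) (kseq (n + 1)), x i = 0}

/-- The null set `G = ⋂_m ⋃_{n>m} A_n`. -/
def Gset : Set Cantor := ⋂ m, ⋃ n > m, Aset n

/-- The rationals: eventually-zero elements of `2^ω`. -/
def Qset : Set Cantor := {z | ∀ᶠ n in atTop, z n = 0}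

/-- `𝒮 = {z ∈ 2^ω : z ↾ [k_n, k_{n+1}) = 1 for infinitely many n}`. -/
def Sset : Set Cantor :=
  {z | ∃ᶠ n in atTop, ∀ i ∈ Set.Ico (kseq n) (kseq (n + 1)), z i = 1}

/-- `[x]* = {z ∈ 𝒮 : z(n) ≤ x(n) for all but finitely many n}`. -/
def starSet (x : Cantor) : Set Cantor :=
  {z ∈ Sset | ∀ᶠ n in atTop, (z n).val ≤ (x n).val}

/-- `𝔭 = 2^{ℵ₀}`: every family of infinite subsets of `ω` of size `< 2^{ℵ₀}` with the
finite intersection property (all finite intersections infinite) has an infinite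
pseudo-intersection. -/
def PseudoIntersectionNumberEqContinuum : Prop :=
  ∀ F : Set (Set ℕ), Cardinal.mk F < 2 ^ Cardinal.aleph0 →
    (∀ A ∈ F, A.Infinite) →
    (∀ G : Finset (Set ℕ), ↑G ⊆ F → (⋂₀ (G : Set (Set ℕ))).Infinite) →
    ∃ A : Set ℕ, A.Infinite ∧ ∀ B ∈ F, (A \ B).Finite

/-- The first uncountable ordinal `ω₁`. -/
noncomputable def omega1 : Ordinal.{0} := (Cardinal.aleph 1).ord

/-- `C` is closed unbounded in `ω₁`: a subset of `ω₁` which is unbounded in `ω₁` and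
contains the supremum of every nonempty bounded subset of itself whose supremum is
below `ω₁`. -/
def IsClubIn (C : Set Ordinal.{0}) : Prop :=
  C ⊆ Set.Iio omega1 ∧ (∀ β < omega1, ∃ γ ∈ C, β < γ) ∧
    ∀ S : Set Ordinal.{0}, S ⊆ C → S.Nonempty → BddAbove S → sSup S < omega1 → sSup S ∈ C

/-- `T` is stationary in `ω₁`: it meets every closed unbounded subset of `ω₁`. -/
def IsStationaryIn (T : Set Ordinal.{0}) : Prop :=
  ∀ C : Set Ordinal.{0}, IsClubIn C → (T ∩ C).Nonempty

/-- Jensen's diamond principle `◊`: there is a sequence `(A_α)_{α<ω₁}` with `A_α ⊆ α`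
such that for every `B ⊆ ω₁` the set `{α < ω₁ : B ∩ α = A_α}` is stationary in `ω₁`. -/
def DiamondPrinciple : Prop :=
  ∃ A : Ordinal.{0} → Set Ordinal.{0}, (∀ α < omega1, A α ⊆ Set.Iio α) ∧
    ∀ B : Set Ordinal.{0}, B ⊆ Set.Iio omega1 →
      IsStationaryIn {α | α < omega1 ∧ B ∩ Set.Iio α = A α}

/-- The binary expansion map `f : 2^ω → [0,1]`, `f(x) = Σ_i x(i)·2^{-(i+1)}`. -/
noncomputable def binmap (x : Cantor) : ℝ := ∑' i : ℕ, ((x i).val : ℝ) / 2 ^ (i + 1)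

/-- `H = ⋂_m ⋃_{n>m} f(A_n)`. -/
noncomputable def Hset : Set ℝ := ⋂ m, ⋃ n > m, binmap '' (Aset n)

/-- The rational numbers as a subset of `ℝ`. -/
def Qreal : Set ℝ := Set.range ((↑) : ℚ → ℝ)

/-!
The set `X` consists of points `x_α`, `α < ω₁`, chosen by recursion along with countable families
of closed sets, the conditions. On each nonempty relatively open part of a condition, infinitely
many of the restrictions of points to the blocks `[k_n, k_{n+1})` take all possible values. Hence
most points of a condition agree with a given `z` on infinitely many blocks, that is,
`z - x ∈ Gset` for such a point `x`. As `◊` guesses every `z`, the point `x_α` can be chosen so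
that `X + Gset` is everything.

To make a subset `Y` of `X` a γ-set, let `◊` guess an ω-cover `J` of `Y` together with the part
`Y_α` of `Y` that has already been chosen at stage `α`; passing to clopen sets, of which there
are countably many, makes `J` small enough to be guessed. By fusion, the earlier conditions can
be shrunk so that there is a sequence in `J` which converges to every point of `Y_α` and to every
point of the new conditions, except for points that lie in an earlier condition disjoint from
`Y_α`. All later points are chosen in the new conditions. A closing-off argument lets us assume
that an earlier condition which meets `Y` also meets `Y_α`, so the exception does not concern
points of `Y`, and the sequence converges to every point of `Y`.
-/

section RichSets

variable {E : Type*} [TopologicalSpace E] {ι : ℕ → Type*} {π : ∀ i, E → ι i} {p : Set E}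

/-- A set is rich for a sequence of colourings `π i` of the space if infinitely many of these
colourings use all of their colours on each nonempty relatively open part of the set. Rich closed
sets play the role of perfect sets. -/
def IsRich (π : ∀ i, E → ι i) (p : Set E) : Prop :=
  ∀ U, IsOpen U → (p ∩ U).Nonempty → ∃ᶠ i in atTop, SurjOn (π i) (p ∩ U) univ

theorem IsRich.inter_isOpen (hp : IsRich π p) {V : Set E} (hV : IsOpen V) :
    IsRich π (p ∩ V) := by
  intro U hU hne
  rw [inter_assoc] at hne ⊢
  exact hp _ (hV.inter hU) hne

theorem eventually_residual_mem_of_isOpen {O : Set E} (hO : IsOpen O)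
    (hmeet : ∀ U, IsOpen U → (p ∩ U).Nonempty → (p ∩ U ∩ O).Nonempty) :
    ∀ᶠ x : p in residual p, (x : E) ∈ O := by
  refine residual_of_dense_open (hO.preimage continuous_subtype_val) ?_
  refine dense_iff_inter_open.2 fun _ ⟨U, hU, hUeq⟩ ⟨x, hx⟩ => ?_
  subst hUeq
  obtain ⟨y, ⟨hyp, hyU⟩, hyO⟩ := hmeet U hU ⟨x, x.2, hx⟩
  exact ⟨⟨y, hyp⟩, hyU, hyO⟩

theorem IsRich.eventually_residual_ne [T1Space E] [∀ i, Nontrivial (ι i)] (hp : IsRich π p)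
    (y : E) : ∀ᶠ x : p in residual p, (x : E) ≠ y := by
  refine eventually_residual_mem_of_isOpen isOpen_compl_singleton fun U hU hne => ?_
  obtain ⟨i, hi⟩ := (hp U hU hne).exists
  obtain ⟨t, ht⟩ := exists_ne (π i y)
  obtain ⟨x, hx, rfl⟩ := hi (mem_univ t)
  exact ⟨x, hx, fun hxy => ht (congrArg (π i) hxy)⟩

theorem IsRich.eventually_residual_frequently_eq (hπ : ∀ i, IsLocallyConstant (π i))
    (hp : IsRich π p) (z : ∀ i, ι i) :
    ∀ᶠ x : p in residual p, ∃ᶠ i in atTop, π i x = z i := by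
  have hmem (m : ℕ) : ∀ᶠ x : p in residual p, (x : E) ∈ ⋃ i ≥ m, π i ⁻¹' {z i} := by
    refine eventually_residual_mem_of_isOpen
      (isOpen_biUnion fun i _ => (hπ i).isOpen_fiber (z i)) fun U hU hne => ?_
    obtain ⟨i, him, hi⟩ := frequently_atTop.1 (hp U hU hne) m
    obtain ⟨x, hx, hxi⟩ := hi (mem_univ (z i))
    exact ⟨x, hx, mem_biUnion him hxi⟩
  filter_upwards [eventually_countable_forall.2 hmem] with x hx
  refine frequently_atTop.2 fun m => ?_
  obtain ⟨i, him, hi⟩ := mem_iUnion₂.1 (hx m)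
  exact ⟨i, him, hi⟩

theorem IsRich.exists_notMem_frequently_eq [CompactSpace E] [T2Space E] [∀ i, Nontrivial (ι i)]
    (hπ : ∀ i, IsLocallyConstant (π i)) (hp : IsRich π p) (hclosed : IsClosed p)
    (hne : p.Nonempty) {Z : Set E} (hZ : Z.Countable) (z : ∀ i, ι i) :
    ∃ x ∈ p, x ∉ Z ∧ ∃ᶠ i in atTop, π i x = z i := by
  have : CompactSpace p := isCompact_iff_compactSpace.1 hclosed.isCompact
  have : Nonempty p := hne.to_subtype
  have hmem : ∀ᶠ x : p in residual p, (∀ y ∈ Z, (x : E) ≠ y) ∧ ∃ᶠ i in atTop, π i x = z i :=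
    ((eventually_countable_ball hZ).2 fun y _ => hp.eventually_residual_ne y).and
      (hp.eventually_residual_frequently_eq hπ z)
  obtain ⟨x, hxZ, hxz⟩ := (dense_of_mem_residual hmem).nonempty
  exact ⟨x, x.2, fun hx => hxZ x hx rfl, hxz⟩

end RichSets

section RichFamilies

/-- `R` is open dense in the notion of forcing `ℱ`, where stronger conditions are smaller. -/
structure IsOpenDense {α : Type*} [Preorder α] (ℱ R : Set α) : Prop where
  isLowerSet : IsLowerSet R
  isCoinitialFor : IsCoinitialFor ℱ (ℱ ∩ R)

theorem isOpenDense_univ {α : Type*} [Preorder α] (ℱ : Set α) : IsOpenDense ℱ univ :=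
  ⟨isLowerSet_univ, by rw [inter_univ]⟩

theorem IsOpenDense.isCoinitialFor_inter {α : Type*} [Preorder α] {ℱ Φ R S : Set α}
    (hR : IsOpenDense ℱ R) (hS : IsLowerSet S) (hΦ : IsCoinitialFor Φ (ℱ ∩ S)) :
    IsCoinitialFor Φ (ℱ ∩ (R ∩ S)) := by
  intro p hp
  obtain ⟨q, ⟨hq, hqS⟩, hqp⟩ := hΦ hp
  obtain ⟨r, ⟨hr, hrR⟩, hrq⟩ := hR.isCoinitialFor hq
  exact ⟨r, ⟨hr, hrR, hS hrq hqS⟩, hrq.trans hqp⟩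

/-- The sets that meet `Y` only if they are contained in `D`. With `Y = D` these are the sets which
`D` does not split. -/
def decidingSets {E : Type*} (Y D : Set E) : Set (Set E) := {Q | Disjoint Q Y ∨ Q ⊆ D}

theorem isLowerSet_decidingSets {E : Type*} (Y D : Set E) : IsLowerSet (decidingSets Y D) :=
  fun _ _ hle => Or.imp (fun h => h.mono_left hle) (fun h => hle.trans h)

variable {E : Type*} [TopologicalSpace E] {ι : ℕ → Type*} {π : ∀ i, E → ι i}
  {ℱ 𝒢 Φ Ψ : Set (Set E)}

/-- A family of nonempty rich closed sets, among which every nonempty relatively open part of a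
member contains a member. Ordered by inclusion it is a notion of forcing similar to that of perfect
trees. -/
structure IsRichFamily (π : ∀ i, E → ι i) (ℱ : Set (Set E)) : Prop where
  isClosed : ∀ p ∈ ℱ, IsClosed p
  nonempty : ∀ p ∈ ℱ, p.Nonempty
  isRich : ∀ p ∈ ℱ, IsRich π p
  exists_subset : ∀ p ∈ ℱ, ∀ U, IsOpen U → (p ∩ U).Nonempty → ∃ q ∈ ℱ, q ⊆ p ∩ U

theorem IsRichFamily.union (hℱ : IsRichFamily π ℱ) (h𝒢 : IsRichFamily π 𝒢) :
    IsRichFamily π (ℱ ∪ 𝒢) where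
  isClosed p hp := hp.elim (hℱ.isClosed p) (h𝒢.isClosed p)
  nonempty p hp := hp.elim (hℱ.nonempty p) (h𝒢.nonempty p)
  isRich p hp := hp.elim (hℱ.isRich p) (h𝒢.isRich p)
  exists_subset p hp U hU hne := by
    rcases hp with hp | hp
    · exact (hℱ.exists_subset p hp U hU hne).imp fun _ hq => ⟨Or.inl hq.1, hq.2⟩
    · exact (h𝒢.exists_subset p hp U hU hne).imp fun _ hq => ⟨Or.inr hq.1, hq.2⟩

theorem IsRichFamily.iUnion {κ : Sort*} {ℱ : κ → Set (Set E)}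
    (hℱ : ∀ k, IsRichFamily π (ℱ k)) : IsRichFamily π (⋃ k, ℱ k) where
  isClosed p hp := let ⟨k, hk⟩ := mem_iUnion.1 hp; (hℱ k).isClosed p hk
  nonempty p hp := let ⟨k, hk⟩ := mem_iUnion.1 hp; (hℱ k).nonempty p hk
  isRich p hp := let ⟨k, hk⟩ := mem_iUnion.1 hp; (hℱ k).isRich p hk
  exists_subset p hp U hU hne := by
    obtain ⟨k, hk⟩ := mem_iUnion.1 hp
    exact ((hℱ k).exists_subset p hk U hU hne).imp fun _ hq => ⟨mem_iUnion_of_mem k hq.1, hq.2⟩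

/-- The nonempty parts cut out of the members of `𝒢` by clopen sets. -/
def clopenParts (𝒢 : Set (Set E)) : Set (Set E) :=
  {q | q.Nonempty ∧ ∃ p ∈ 𝒢, ∃ K : TopologicalSpace.Clopens E, q = p ∩ K}

theorem countable_clopenParts [CompactSpace E] [T2Space E] [TotallyDisconnectedSpace E]
    [SecondCountableTopology E] (h𝒢 : 𝒢.Countable) : (clopenParts 𝒢).Countable := by
  have : Countable (TopologicalSpace.Clopens E) :=
    TopologicalSpace.Clopens.countable_iff_secondCountable.2 inferInstance
  refine (h𝒢.image2 (countable_univ (α := TopologicalSpace.Clopens E))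
    fun p K => p ∩ K).mono ?_
  rintro _ ⟨-, p, hp, K, rfl⟩
  exact ⟨p, hp, K, mem_univ K, rfl⟩

theorem isRichFamily_clopenParts [CompactSpace E] [T2Space E] [TotallyDisconnectedSpace E]
    (hclosed : ∀ p ∈ 𝒢, IsClosed p) (hrich : ∀ p ∈ 𝒢, IsRich π p) :
    IsRichFamily π (clopenParts 𝒢) where
  isClosed := by
    rintro _ ⟨-, p, hp, K, rfl⟩
    exact (hclosed p hp).inter K.isClopen.isClosed
  nonempty _ hq := hq.1
  isRich := by
    rintro _ ⟨-, p, hp, K, rfl⟩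
    exact (hrich p hp).inter_isOpen K.isClopen.isOpen
  exists_subset := by
    rintro _ ⟨-, p, hp, K, rfl⟩ U hU ⟨x, ⟨hxp, hxK⟩, hxU⟩
    obtain ⟨V, hV, hxV, hVU⟩ := compact_exists_isClopen_in_isOpen hU hxU
    exact ⟨p ∩ (K ⊓ ⟨V, hV⟩ : TopologicalSpace.Clopens E),
      ⟨⟨x, hxp, hxK, hxV⟩, p, hp, _, rfl⟩,
      fun y hy => ⟨⟨hy.1, hy.2.1⟩, hVU hy.2.2⟩⟩

theorem IsRichFamily.isCoinitialFor_inter_decidingSets (hℱ : IsRichFamily π ℱ) (hΦ : Φ ⊆ ℱ)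
    {Y D : Set E} (hD : IsOpen D) (hmeet : ∀ Q ∈ Φ, (Q ∩ Y).Nonempty → (Q ∩ D).Nonempty) :
    IsCoinitialFor Φ (ℱ ∩ decidingSets Y D) := by
  intro P hP
  by_cases hPY : Disjoint P Y
  · exact ⟨P, ⟨hΦ hP, Or.inl hPY⟩, le_rfl⟩
  · obtain ⟨Q, hQ, hQP⟩ := hℱ.exists_subset P (hΦ hP) D hD
      (hmeet P hP (not_disjoint_iff_nonempty_inter.1 hPY))
    exact ⟨Q, ⟨hQ, Or.inr (hQP.trans inter_subset_right)⟩, hQP.trans inter_subset_left⟩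

theorem IsRichFamily.isOpenDense_decidingSets (hℱ : IsRichFamily π ℱ) {V : Set E}
    (hV : IsOpen V) : IsOpenDense ℱ (decidingSets V V) :=
  ⟨isLowerSet_decidingSets V V,
    hℱ.isCoinitialFor_inter_decidingSets Subset.rfl hV fun _ _ => id⟩

/-- `Ψ` refines the finite front `Φ` inside `ℱ`, at level `n`: each member of `Φ` is split
completely by some colouring of index at least `n`. -/
structure IsRefinement (π : ∀ i, E → ι i) (ℱ : Set (Set E)) (n : ℕ) (Φ Ψ : Set (Set E)) :
    Prop where
  finite : Ψ.Finite
  subset : Ψ ⊆ ℱ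
  isCofinalFor : IsCofinalFor Ψ Φ
  exists_fiber : ∀ P ∈ Φ, ∃ i ≥ n, ∀ t, ∃ Q ∈ Ψ, Q ⊆ P ∩ π i ⁻¹' {t}

theorem IsRichFamily.exists_subset_fiber (hℱ : IsRichFamily π ℱ)
    (hπ : ∀ i, IsLocallyConstant (π i)) {P : Set E} (hP : P ∈ ℱ) (n : ℕ) :
    ∃ i ≥ n, SurjOn (π i) P univ ∧ ∀ t, ∃ Q ∈ ℱ, Q ⊆ P ∩ π i ⁻¹' {t} := by
  have hrich := hℱ.isRich P hP univ isOpen_univ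
  rw [inter_univ] at hrich
  obtain ⟨i, hin, hi⟩ := frequently_atTop.1 (hrich (hℱ.nonempty P hP)) n
  refine ⟨i, hin, hi, fun t => hℱ.exists_subset P hP _ ((hπ i).isOpen_fiber t) ?_⟩
  obtain ⟨x, hx, hxt⟩ := hi (mem_univ t)
  exact ⟨x, hx, hxt⟩

theorem IsRichFamily.exists_refinement_singleton [CompactSpace E] (hℱ : IsRichFamily π ℱ)
    (hπ : ∀ i, IsLocallyConstant (π i)) {P : Set E} (hP : P ∈ ℱ) (n : ℕ) :
    ∃ Ψ, IsRefinement π ℱ n {P} Ψ := by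
  obtain ⟨i, hin, hsurj, hfiber⟩ := hℱ.exists_subset_fiber hπ hP n
  choose Q hQ hQP using hfiber
  have : Finite (ι i) := finite_univ_iff.1 <|
    (hπ i).range_finite.subset fun t ht => image_subset_range _ _ (hsurj ht)
  exact ⟨range Q, finite_range Q, range_subset_iff.2 hQ,
    forall_mem_range.2 fun t => ⟨P, rfl, (hQP t).trans inter_subset_left⟩,
    by rintro _ rfl; exact ⟨i, hin, fun t => ⟨Q t, mem_range_self t, hQP t⟩⟩⟩

theorem IsRichFamily.exists_refinement [CompactSpace E] (hℱ : IsRichFamily π ℱ)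
    (hπ : ∀ i, IsLocallyConstant (π i)) (n : ℕ) (hΦ : Φ.Finite) {R : Set (Set E)}
    (hR : IsLowerSet R) (hΦR : IsCoinitialFor Φ (ℱ ∩ R)) :
    ∃ Ψ, IsRefinement π ℱ n Φ Ψ ∧ Ψ ⊆ R := by
  have hsplit : ∀ P ∈ Φ, ∃ Q ∈ R, Q ⊆ P ∧ ∃ Ψ, IsRefinement π ℱ n {Q} Ψ := by
    intro P hP
    obtain ⟨Q, ⟨hQ, hQR⟩, hQP⟩ := hΦR hP
    exact ⟨Q, hQR, hQP, hℱ.exists_refinement_singleton hπ hQ n⟩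
  choose! Q hQR hQP Ψ hΨ using hsplit
  have hle (P) (hP : P ∈ Φ) (S) (hS : S ∈ Ψ P) : S ⊆ Q P := by
    obtain ⟨_, rfl, hSQ⟩ := (hΨ P hP).isCofinalFor hS
    exact hSQ
  refine ⟨⋃ P ∈ Φ, Ψ P, ⟨hΦ.biUnion fun P hP => (hΨ P hP).finite,
    iUnion₂_subset fun P hP => (hΨ P hP).subset, fun S hS => ?_, fun P hP => ?_⟩,
    iUnion₂_subset fun P hP S hS => hR (hle P hP S hS) (hQR P hP)⟩
  · obtain ⟨P, hP, hS⟩ := mem_iUnion₂.1 hS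
    exact ⟨P, hP, (hle P hP S hS).trans (hQP P hP)⟩
  · obtain ⟨i, hin, hi⟩ := (hΨ P hP).exists_fiber _ rfl
    refine ⟨i, hin, fun t => ?_⟩
    obtain ⟨S, hS, hSt⟩ := hi t
    exact ⟨S, mem_biUnion hP hS, hSt.trans (inter_subset_inter_left _ (hQP P hP))⟩

end RichFamilies

section Fusion

variable {E : Type*} {ι : ℕ → Type*} {π : ∀ i, E → ι i}
  {ℱ : Set (Set E)} {P : Set E} {Φ : ℕ → Set (Set E)}

/-- A sequence of fronts in `ℱ` which starts at `P` and in which each front refines the previous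
one. -/
structure IsFusionSequence (π : ∀ i, E → ι i) (ℱ : Set (Set E)) (P : Set E)
    (Φ : ℕ → Set (Set E)) : Prop where
  mem : P ∈ ℱ
  zero : Φ 0 = {P}
  isRefinement : ∀ n, IsRefinement π ℱ n (Φ n) (Φ (n + 1))

/-- The fusion of a sequence of fronts, the points that occur in every front. -/
def fusion (Φ : ℕ → Set (Set E)) : Set E := ⋂ n, ⋃₀ Φ n

namespace IsFusionSequence

theorem finite (hΦ : IsFusionSequence π ℱ P Φ) : ∀ n, (Φ n).Finite
  | 0 => hΦ.zero ▸ finite_singleton P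
  | n + 1 => (hΦ.isRefinement n).finite

theorem subset (hΦ : IsFusionSequence π ℱ P Φ) : ∀ n, Φ n ⊆ ℱ
  | 0 => hΦ.zero ▸ singleton_subset_iff.2 hΦ.mem
  | n + 1 => (hΦ.isRefinement n).subset

theorem isCofinalFor (hΦ : IsFusionSequence π ℱ P Φ) {n m : ℕ} (hnm : n ≤ m) :
    IsCofinalFor (Φ m) (Φ n) :=
  Nat.le_induction .rfl (fun m _ h => (hΦ.isRefinement m).isCofinalFor.trans h) m hnm

theorem antitone_sUnion (hΦ : IsFusionSequence π ℱ P Φ) : Antitone fun n => ⋃₀ Φ n := by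
  rintro n m hnm x ⟨Q, hQ, hxQ⟩
  obtain ⟨S, hS, hQS⟩ := hΦ.isCofinalFor hnm hQ
  exact ⟨S, hS, hQS hxQ⟩

theorem fusion_subset (hΦ : IsFusionSequence π ℱ P Φ) : fusion Φ ⊆ P := by
  refine (iInter_subset _ 0).trans ?_
  rw [hΦ.zero, sUnion_singleton]

variable [TopologicalSpace E]

theorem isCoinitialFor (hℱ : IsRichFamily π ℱ) (hΦ : IsFusionSequence π ℱ P Φ) {n m : ℕ}
    (hnm : n ≤ m) : IsCoinitialFor (Φ n) (Φ m) := by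
  refine Nat.le_induction .rfl (fun m _ h => h.trans fun Q hQ => ?_) m hnm
  obtain ⟨i, -, hi⟩ := (hΦ.isRefinement m).exists_fiber Q hQ
  obtain ⟨x, -⟩ := hℱ.nonempty Q (hΦ.subset m hQ)
  obtain ⟨S, hS, hSQ⟩ := hi (π i x)
  exact ⟨S, hS, hSQ.trans inter_subset_left⟩

theorem isClosed_sUnion (hℱ : IsRichFamily π ℱ) (hΦ : IsFusionSequence π ℱ P Φ) (n : ℕ) :
    IsClosed (⋃₀ Φ n) :=
  sUnion_eq_biUnion ▸ (hΦ.finite n).isClosed_biUnion fun Q hQ => hℱ.isClosed Q (hΦ.subset n hQ)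

theorem isClosed_fusion (hℱ : IsRichFamily π ℱ) (hΦ : IsFusionSequence π ℱ P Φ) :
    IsClosed (fusion Φ) :=
  isClosed_iInter (hΦ.isClosed_sUnion hℱ)

variable [CompactSpace E]

theorem inter_fusion_nonempty (hℱ : IsRichFamily π ℱ) (hΦ : IsFusionSequence π ℱ P Φ) {n : ℕ}
    {Q : Set E} (hQ : Q ∈ Φ n) : (Q ∩ fusion Φ).Nonempty := by
  have hclosed (m : ℕ) : IsClosed (Q ∩ ⋃₀ Φ m) :=
    (hℱ.isClosed Q (hΦ.subset n hQ)).inter (hΦ.isClosed_sUnion hℱ m)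
  rw [fusion, inter_iInter]
  refine IsCompact.nonempty_iInter_of_sequence_nonempty_isCompact_isClosed _
    (fun m => inter_subset_inter_right Q (hΦ.antitone_sUnion m.le_succ)) (fun m => ?_)
    (hclosed 0).isCompact hclosed
  obtain ⟨S, hS, hSQ⟩ := hΦ.isCoinitialFor hℱ (le_max_left n m) hQ
  obtain ⟨x, hx⟩ := hℱ.nonempty S (hΦ.subset _ hS)
  exact ⟨x, hSQ hx, hΦ.antitone_sUnion (le_max_right n m) ⟨S, hS, hx⟩⟩

theorem fusion_nonempty (hℱ : IsRichFamily π ℱ) (hΦ : IsFusionSequence π ℱ P Φ) :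
    (fusion Φ).Nonempty :=
  (hΦ.inter_fusion_nonempty hℱ (n := 0) (hΦ.zero ▸ mem_singleton P)).mono inter_subset_right

/-- If the fronts eventually decide each basic open set, then their members shrink to points, so
the splittings of the fronts occur inside any given open set. -/
theorem isRich_fusion (hℱ : IsRichFamily π ℱ) (hΦ : IsFusionSequence π ℱ P Φ) {ℬ : Set (Set E)}
    (hℬ : TopologicalSpace.IsTopologicalBasis ℬ) (hdec : ∀ V ∈ ℬ, ∃ n, Φ n ⊆ decidingSets V V) :
    IsRich π (fusion Φ) := by
  rintro U hU ⟨x, hx, hxU⟩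
  obtain ⟨V, hV, hxV, hVU⟩ := hℬ.exists_subset_of_mem_open hxU hU
  obtain ⟨n, hn⟩ := hdec V hV
  refine frequently_atTop.2 fun m => ?_
  obtain ⟨Q, hQ, hxQ⟩ := mem_iInter.1 hx (max n m)
  obtain ⟨S, hS, hQS⟩ := hΦ.isCofinalFor (le_max_left n m) hQ
  have hSV : S ⊆ V :=
    (hn hS).resolve_left fun hdisj => hdisj.le_bot ⟨hQS hxQ, hxV⟩
  obtain ⟨i, hi, hfiber⟩ := (hΦ.isRefinement _).exists_fiber Q hQ
  refine ⟨i, (le_max_right n m).trans hi, fun t _ => ?_⟩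
  obtain ⟨T, hT, hTQ⟩ := hfiber t
  obtain ⟨y, hyT, hy⟩ := hΦ.inter_fusion_nonempty hℱ hT
  exact ⟨y, ⟨hy, hVU (hSV (hQS (hTQ hyT).1))⟩, (hTQ hyT).2⟩

end IsFusionSequence

end Fusion

section FusionFamily

variable {E : Type*} [TopologicalSpace E] {ι : ℕ → Type*} {π : ∀ i, E → ι i}
  {ℱ J : Set (Set E)} {Y : Set E}

/-- An ω-cover has a member that contains a point of `Y` from each of finitely many sets meeting
`Y`. -/
theorem IsRichFamily.exists_isCoinitialFor_decidingSets (hℱ : IsRichFamily π ℱ)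
    (hJ : ∀ U ∈ J, IsOpen U) (hJY : IsOmegaCover J Y) {F : Set E} (hF : F.Finite) (hFY : F ⊆ Y)
    {Φ : Set (Set E)} (hΦ : Φ.Finite) (hΦℱ : Φ ⊆ ℱ) :
    ∃ D ∈ J, F ⊆ D ∧ IsCoinitialFor Φ (ℱ ∩ decidingSets Y D) := by
  choose y hyQ hyY using fun Q : {Q ∈ Φ | (Q ∩ Y).Nonempty} => Q.2.2
  have : Finite {Q ∈ Φ | (Q ∩ Y).Nonempty} := hΦ.sep _
  have hfin : (F ∪ range y).Finite := hF.union (finite_range y)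
  obtain ⟨D, hD, hFD⟩ := hJY hfin.toFinset <| by
    rw [hfin.coe_toFinset]
    exact union_subset hFY (range_subset_iff.2 hyY)
  rw [hfin.coe_toFinset, union_subset_iff, range_subset_iff] at hFD
  exact ⟨D, hD, hFD.1, hℱ.isCoinitialFor_inter_decidingSets hΦℱ (hJ D hD)
    fun Q hQ hQY => ⟨y ⟨Q, hQ, hQY⟩, hyQ ⟨Q, hQ, hQY⟩, hFD.2 _⟩⟩

theorem IsRichFamily.exists_seq_isOpenDense [SecondCountableTopology E] (hℱ : IsRichFamily π ℱ)
    {𝓡 : Set (Set (Set E))} (hcount : 𝓡.Countable) (h𝓡 : ∀ R ∈ 𝓡, IsOpenDense ℱ R) :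
    ∃ R : ℕ → Set (Set E), (∀ n, IsOpenDense ℱ (R n)) ∧ (∀ S ∈ 𝓡, ∃ n, R n = S) ∧
      ∀ V ∈ TopologicalSpace.countableBasis E, ∃ n, R n = decidingSets V V := by
  obtain ⟨R, hR⟩ := ((hcount.union ((TopologicalSpace.countable_countableBasis E).image
    fun V => decidingSets V V)).insert univ).exists_eq_range (insert_nonempty _ _)
  refine ⟨R, forall_mem_range.1 ?_, fun S hS => ?_, fun V hV => ?_⟩
  · rw [← hR]
    rintro _ (rfl | hS | ⟨V, hV, rfl⟩)
    · exact isOpenDense_univ ℱ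
    · exact h𝓡 _ hS
    · exact hℱ.isOpenDense_decidingSets (TopologicalSpace.isOpen_of_mem_countableBasis hV)
  · exact hR.subset (Or.inr (Or.inl hS))
  · exact hR.subset (Or.inr (Or.inr ⟨V, hV, rfl⟩))

variable [CompactSpace E]

theorem IsRichFamily.exists_refinements (hℱ : IsRichFamily π ℱ)
    (hπ : ∀ i, IsLocallyConstant (π i)) (hJ : ∀ U ∈ J, IsOpen U) (hJY : IsOmegaCover J Y)
    {F : Set E} (hF : F.Finite) (hFY : F ⊆ Y) {R : Set (Set E)} (hR : IsOpenDense ℱ R)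
    {κ : Type*} {A : Set κ} (hA : A.Finite) (n : ℕ) {Φ : κ → Set (Set E)}
    (hΦ : ∀ k, (Φ k).Finite ∧ Φ k ⊆ ℱ) :
    ∃ D ∈ J, F ⊆ D ∧ ∃ Ψ : κ → Set (Set E), ∀ k, IsRefinement π ℱ n (Φ k) (Ψ k) ∧ Ψ k ⊆ R ∧
      (k ∈ A → Ψ k ⊆ decidingSets Y D) := by
  obtain ⟨D, hD, hFD, hcoinit⟩ := hℱ.exists_isCoinitialFor_decidingSets hJ hJY hF hFY
    (hA.biUnion fun k _ => (hΦ k).1) (iUnion₂_subset fun k _ => (hΦ k).2)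
  have href (k : κ) : ∃ Ψ, IsRefinement π ℱ n (Φ k) Ψ ∧ Ψ ⊆ R ∧
      (k ∈ A → Ψ ⊆ decidingSets Y D) := by
    by_cases hk : k ∈ A
    · obtain ⟨Ψ, hΨ, hΨR⟩ := hℱ.exists_refinement hπ n (hΦ k).1
        (hR.isLowerSet.inter (isLowerSet_decidingSets Y D))
        (hR.isCoinitialFor_inter (isLowerSet_decidingSets Y D)
          (hcoinit.mono_left (subset_biUnion_of_mem hk)))
      exact ⟨Ψ, hΨ, hΨR.trans inter_subset_left, fun _ => hΨR.trans inter_subset_right⟩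
    · obtain ⟨Ψ, hΨ, hΨR⟩ := hℱ.exists_refinement hπ n (hΦ k).1 hR.isLowerSet
        (hR.isCoinitialFor.mono_left (hΦ k).2)
      exact ⟨Ψ, hΨ, hΨR, fun h => absurd h hk⟩
  choose Ψ hΨ using href
  exact ⟨D, hD, hFD, Ψ, hΨ⟩

theorem IsRichFamily.exists_fusionSequences (hℱ : IsRichFamily π ℱ)
    (hπ : ∀ i, IsLocallyConstant (π i)) (hJ : ∀ U ∈ J, IsOpen U) (hJY : IsOmegaCover J Y)
    {F : ℕ → Set E} (hF : ∀ n, (F n).Finite) (hFY : ∀ n, F n ⊆ Y)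
    {R : ℕ → Set (Set E)} (hR : ∀ n, IsOpenDense ℱ (R n))
    {A : ℕ → Set ℱ} (hA : ∀ n, (A n).Finite) :
    ∃ D : ℕ → Set E, (∀ n, D n ∈ J ∧ F n ⊆ D n) ∧ ∃ Φ : ℱ → ℕ → Set (Set E),
      (∀ P : ℱ, IsFusionSequence π ℱ P (Φ P)) ∧ (∀ P n, Φ P (n + 1) ⊆ R n) ∧
      ∀ n, ∀ P ∈ A n, Φ P (n + 1) ⊆ decidingSets Y (D n) := by
  have hstep (n : ℕ) (Φ : {Φ : ℱ → Set (Set E) // ∀ P, (Φ P).Finite ∧ Φ P ⊆ ℱ}) :=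
    hℱ.exists_refinements hπ hJ hJY (hF n) (hFY n) (hR n) (hA n) n Φ.2
  choose D hDJ hFD Ψ hΨ using hstep
  let front : ℕ → {Φ : ℱ → Set (Set E) // ∀ P, (Φ P).Finite ∧ Φ P ⊆ ℱ} := Nat.rec
    ⟨fun P => {P.1}, fun P => ⟨finite_singleton _, singleton_subset_iff.2 P.2⟩⟩
    fun n Φ => ⟨Ψ n Φ, fun P => ⟨(hΨ n Φ P).1.finite, (hΨ n Φ P).1.subset⟩⟩
  exact ⟨fun n => D n (front n), fun n => ⟨hDJ n _, hFD n _⟩, fun P n => (front n).1 P,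
    fun P => ⟨P.2, rfl, fun n => (hΨ n (front n) P).1⟩, fun P n => (hΨ n (front n) P).2.1,
    fun n P => (hΨ n (front n) P).2.2⟩

theorem IsRichFamily.exists_fusions [SecondCountableTopology E] (hℱ : IsRichFamily π ℱ)
    (hπ : ∀ i, IsLocallyConstant (π i)) (hcount : ℱ.Countable) {𝓡 : Set (Set (Set E))}
    (h𝓡count : 𝓡.Countable) (h𝓡 : ∀ R ∈ 𝓡, IsOpenDense ℱ R)
    (hJ : ∀ U ∈ J, IsOpen U) (hJY : IsOmegaCover J Y) (hY : Y.Countable) :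
    ∃ T : ℱ → Set E, (∀ P, IsClosed (T P) ∧ (T P).Nonempty ∧ IsRich π (T P) ∧ T P ⊆ P) ∧
      (∀ P, ∀ R ∈ 𝓡, T P ⊆ ⋃₀ R) ∧ ∃ D : ℕ → Set E, (∀ n, D n ∈ J) ∧
      (∀ y ∈ Y, ∀ᶠ n in atTop, y ∈ D n) ∧
      ∀ P, ∀ x ∈ T P, (∀ᶠ n in atTop, x ∈ D n) ∨ ∃ Q ∈ ℱ, x ∈ Q ∧ Disjoint Q Y := by
  have : Countable ℱ := hcount
  let F := hY.finiteExhaustion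
  let A := (countable_univ (α := ℱ)).finiteExhaustion
  obtain ⟨R, hR, hR𝓡, hRbasis⟩ := hℱ.exists_seq_isOpenDense h𝓡count h𝓡
  obtain ⟨D, hD, Φ, hΦ, hΦR, hΦD⟩ := hℱ.exists_fusionSequences hπ hJ hJY F.finite
    (fun n => (subset_iUnion F n).trans_eq F.iUnion_eq) hR A.finite
  refine ⟨fun P => fusion (Φ P), fun P => ⟨(hΦ P).isClosed_fusion hℱ, (hΦ P).fusion_nonempty hℱ,
    (hΦ P).isRich_fusion hℱ (TopologicalSpace.isBasis_countableBasis E) fun V hV => ?_,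
    (hΦ P).fusion_subset⟩, fun P S hS => ?_, D, fun n => (hD n).1, fun y hy => ?_,
    fun P x hx => or_iff_not_imp_right.2 fun hdisj => ?_⟩
  · obtain ⟨n, hn⟩ := hRbasis V hV
    exact ⟨n + 1, hn ▸ hΦR P n⟩
  · obtain ⟨n, rfl⟩ := hR𝓡 S hS
    exact (iInter_subset _ (n + 1)).trans (sUnion_subset_sUnion (hΦR P n))
  · obtain ⟨n, hn⟩ := mem_iUnion.1 (F.iUnion_eq.superset hy)
    exact eventually_atTop.2 ⟨n, fun m hm => (hD m).2 (F.mono hm hn)⟩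
  · obtain ⟨n, hn⟩ := mem_iUnion.1 (A.iUnion_eq.superset (mem_univ P))
    refine eventually_atTop.2 ⟨n, fun m hm => ?_⟩
    obtain ⟨Q, hQ, hxQ⟩ := mem_iInter.1 hx (m + 1)
    exact (hΦD m P (A.mono hm hn) hQ).resolve_left
      (fun h => hdisj ⟨Q, (hΦ P).subset _ hQ, hxQ, h⟩) hxQ

theorem IsRichFamily.exists_fusionFamily [T2Space E] [TotallyDisconnectedSpace E]
    [SecondCountableTopology E] (hℱ : IsRichFamily π ℱ)
    (hπ : ∀ i, IsLocallyConstant (π i)) (hcount : ℱ.Countable) {𝓡 : Set (Set (Set E))}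
    (h𝓡count : 𝓡.Countable) (h𝓡 : ∀ R ∈ 𝓡, IsOpenDense ℱ R)
    (hJ : ∀ U ∈ J, IsOpen U) (hJY : IsOmegaCover J Y) (hY : Y.Countable) :
    ∃ 𝒯 : Set (Set E), 𝒯.Countable ∧ IsRichFamily π 𝒯 ∧ IsCoinitialFor ℱ 𝒯 ∧
      (∀ R ∈ 𝓡, ⋃₀ 𝒯 ⊆ ⋃₀ R) ∧ ∃ D : ℕ → Set E, (∀ n, D n ∈ J) ∧
      (∀ y ∈ Y, ∀ᶠ n in atTop, y ∈ D n) ∧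
      ∀ x ∈ ⋃₀ 𝒯, (∀ᶠ n in atTop, x ∈ D n) ∨ ∃ Q ∈ ℱ, x ∈ Q ∧ Disjoint Q Y := by
  have : Countable ℱ := hcount
  obtain ⟨T, hT, hT𝓡, D, hDJ, hDY, hTD⟩ :=
    hℱ.exists_fusions hπ hcount h𝓡count h𝓡 hJ hJY hY
  have hsub : ∀ x ∈ ⋃₀ clopenParts (range T), ∃ P, x ∈ T P := by
    rintro x ⟨_, ⟨-, _, ⟨P, rfl⟩, K, rfl⟩, hx, -⟩
    exact ⟨P, hx⟩
  refine ⟨clopenParts (range T), countable_clopenParts (countable_range T),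
    isRichFamily_clopenParts (forall_mem_range.2 fun P => (hT P).1)
      (forall_mem_range.2 fun P => (hT P).2.2.1), fun P hP => ?_, fun S hS x hx => ?_,
    D, hDJ, hDY, fun x hx => ?_⟩
  · exact ⟨T ⟨P, hP⟩, ⟨(hT _).2.1, _, mem_range_self _, ⊤, (inter_univ _).symm⟩, (hT _).2.2.2⟩
  · obtain ⟨P, hxP⟩ := hsub x hx
    exact hT𝓡 P S hS hxP
  · obtain ⟨P, hxP⟩ := hsub x hx
    exact hTD P x hxP

end FusionFamily

section Guessing

open Ordinal

theorem omega1_eq_omega_one : omega1 = ω_ 1 := Cardinal.ord_aleph 1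

theorem succ_lt_omega1 {α : Ordinal.{0}} (hα : α < omega1) : Order.succ α < omega1 :=
  (Cardinal.isSuccLimit_ord (Cardinal.aleph0_le_aleph 1)).succ_lt hα

theorem omega0_add_lt_omega1 {α : Ordinal.{0}} (hα : α < omega1) : ω + α < omega1 := by
  rw [omega1_eq_omega_one] at *
  exact isPrincipal_add_omega 1 omega0_lt_omega_one hα

theorem countable_Iio_of_lt_omega1 {α : Ordinal.{0}} (hα : α < omega1) : (Iio α).Countable := by
  rw [← Cardinal.le_aleph0_iff_set_countable, Cardinal.mk_Iio_ordinal, Cardinal.lift_le_aleph0,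
    ← Order.lt_succ_iff, Cardinal.succ_aleph0]
  exact Cardinal.lt_ord.1 hα

theorem exists_lt_omega1_forall_lt {κ : Type*} [Countable κ] {f : κ → Ordinal.{0}}
    (hf : ∀ k, f k < omega1) : ∃ γ < omega1, ∀ k, f k < γ := by
  refine ⟨⨆ k, Order.succ (f k), ?_, fun k => Ordinal.lt_iSup_iff.2 ⟨k, Order.lt_succ _⟩⟩
  have hsucc (k : κ) : Order.succ (f k) < omega1 := succ_lt_omega1 (hf k)
  rw [omega1_eq_omega_one] at *
  exact iSup_lt_omega_one hsucc

theorem exists_lt_omega1_disjoint {E : Type*} {𝒬 : Set (Set E)} (h𝒬 : 𝒬.Countable)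
    (x : Ordinal.{0} → E) {A : Set Ordinal.{0}} (hA : A ⊆ Iio omega1) :
    ∃ γ < omega1, ∀ Q ∈ 𝒬, Disjoint Q (x '' (A ∩ Iio γ)) → Disjoint Q (x '' A) := by
  choose! δ hδ hδQ using fun (Q : Set E) (hQ : ∃ δ ∈ A, x δ ∈ Q) => hQ
  let 𝒬' := {Q ∈ 𝒬 | ∃ δ ∈ A, x δ ∈ Q}
  have : Countable 𝒬' := h𝒬.mono (sep_subset _ _)
  obtain ⟨γ, hγ, hlt⟩ := exists_lt_omega1_forall_lt fun Q : 𝒬' => hA (hδ Q Q.2.2)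
  refine ⟨γ, hγ, fun Q hQ hdisj => disjoint_right.2 ?_⟩
  rintro _ ⟨ε, hε, rfl⟩ hεQ
  have hmeet : ∃ δ ∈ A, x δ ∈ Q := ⟨ε, hε, hεQ⟩
  exact disjoint_left.1 hdisj (hδQ Q hmeet) ⟨δ Q, ⟨hδ Q hmeet, hlt ⟨Q, hQ, hmeet⟩⟩, rfl⟩

theorem exists_lt_omega1_closed {g : Ordinal.{0} → Ordinal.{0}}
    (hg : ∀ β < omega1, g β < omega1) {α : Ordinal.{0}} (hα : α < omega1) :
    ∃ γ < omega1, α < γ ∧ ∀ β < γ, g β < γ := by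
  have hbound : ∀ γ < omega1, ∃ δ < omega1, ∀ β < γ, g β < δ := by
    intro γ hγ
    have := (countable_Iio_of_lt_omega1 hγ).to_subtype
    obtain ⟨δ, hδ, h⟩ := exists_lt_omega1_forall_lt fun β : Iio γ => hg β (lt_trans β.2 hγ)
    exact ⟨δ, hδ, fun β hβ => h ⟨β, hβ⟩⟩
  choose! h hh hgh using hbound
  have hcof : Cardinal.aleph0 < omega1.cof := by
    rw [omega1_eq_omega_one, Cardinal.cof_omega_one]
    exact Cardinal.aleph0_lt_aleph_one
  have hnfp : nfp h (Order.succ α) < omega1 := nfp_lt_ord hcof hh (succ_lt_omega1 hα)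
  refine ⟨_, hnfp, lt_nfp_iff.2 ⟨0, Order.lt_succ α⟩, fun β hβ => ?_⟩
  obtain ⟨n, hn⟩ := lt_nfp_iff.1 hβ
  refine lt_nfp_iff.2 ⟨n + 1, ?_⟩
  rw [Function.iterate_succ_apply']
  exact hgh _ ((iterate_le_nfp h _ n).trans_lt hnfp) β hn

theorem isClubIn_setOf_forall_lt {g : Ordinal.{0} → Ordinal.{0}}
    (hg : ∀ β < omega1, g β < omega1) :
    IsClubIn {α | α < omega1 ∧ 0 < α ∧ ∀ β < α, g β < α} := by
  refine ⟨fun _ hα => hα.1, fun β hβ => ?_, fun S hS hne hbdd hlt => ⟨hlt, ?_, fun β hβ => ?_⟩⟩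
  · obtain ⟨γ, hγ, hβγ, hclosed⟩ := exists_lt_omega1_closed hg hβ
    exact ⟨γ, ⟨hγ, bot_le.trans_lt hβγ, hclosed⟩, hβγ⟩
  · obtain ⟨α, hα⟩ := hne
    exact (hS hα).2.1.trans_le (le_csSup hbdd hα)
  · obtain ⟨α, hα, hβα⟩ := (lt_csSup_iff hbdd hne).1 hβ
    exact ((hS hα).2.2 β hβα).trans_le (le_csSup hbdd hα)

/-- A set of ordinals that codes a set `N` of natural numbers, below `ω`, and a set `A` of ordinals,
shifted above `ω`. -/
def codeSet (N : Set ℕ) (A : Set Ordinal.{0}) : Set Ordinal.{0} :=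
  ((↑) : ℕ → Ordinal) '' N ∪ (ω + ·) '' A

theorem natCast_mem_codeSet {N : Set ℕ} {A : Set Ordinal.{0}} {n : ℕ} :
    (n : Ordinal) ∈ codeSet N A ↔ n ∈ N := by
  refine ⟨?_, fun hn => Or.inl ⟨n, hn, rfl⟩⟩
  rintro (⟨m, hm, hmn⟩ | ⟨β, -, hβ⟩)
  · exact Nat.cast_injective hmn ▸ hm
  · exact absurd hβ ((natCast_lt_omega0 n).trans_le le_self_add).ne'

theorem omega0_add_mem_codeSet {N : Set ℕ} {A : Set Ordinal.{0}} {β : Ordinal.{0}} :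
    ω + β ∈ codeSet N A ↔ β ∈ A := by
  refine ⟨?_, fun hβ => Or.inr ⟨β, hβ, rfl⟩⟩
  rintro (⟨n, -, hn⟩ | ⟨γ, hγ, hγβ⟩)
  · exact absurd hn ((natCast_lt_omega0 n).trans_le le_self_add).ne
  · exact add_left_cancel hγβ ▸ hγ

theorem codeSet_subset_Iio_omega1 (N : Set ℕ) {A : Set Ordinal.{0}} (hA : A ⊆ Iio omega1) :
    codeSet N A ⊆ Iio omega1 := by
  rintro _ (⟨n, -, rfl⟩ | ⟨β, hβ, rfl⟩)
  · have hω : ω < omega1 := omega1_eq_omega_one ▸ omega0_lt_omega_one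
    exact (natCast_lt_omega0 n).trans hω
  · exact omega0_add_lt_omega1 (hA hβ)

theorem DiamondPrinciple.exists_guess (hd : DiamondPrinciple) {S : Type*} [Nonempty S]
    {code : S → Set ℕ} (hcode : Function.Injective code) :
    ∃ (s : Ordinal.{0} → S) (B : Ordinal.{0} → Set Ordinal.{0}), ∀ t, ∀ A ⊆ Iio omega1,
      ∀ g : Ordinal.{0} → Ordinal.{0}, (∀ β < omega1, g β < omega1) →
        ∃ α < omega1, 0 < α ∧ (∀ β < α, g β < α) ∧ s α = t ∧ B α = A ∩ Iio α := by
  obtain ⟨G, -, hG⟩ := hd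
  refine ⟨fun α => Function.invFun code {n | (n : Ordinal) ∈ G α},
    fun α => {β | β < α ∧ ω + β ∈ G α}, fun t A hA g hg => ?_⟩
  obtain ⟨α, ⟨hα, hGα⟩, -, h0, hclosed⟩ := hG _ (codeSet_subset_Iio_omega1 (code t) hA) _
    (isClubIn_setOf_forall_lt (g := fun β => max (g β) (ω + β))
      fun β hβ => max_lt (hg β hβ) (omega0_add_lt_omega1 hβ))
  have hadd (β) (hβ : β < α) : ω + β < α := (le_max_right _ _).trans_lt (hclosed β hβ)
  have hnat (n : ℕ) : (n : Ordinal) < α :=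
    (natCast_lt_omega0 n).trans (le_self_add.trans_lt (hadd 0 h0))
  refine ⟨α, hα, h0, fun β hβ => (le_max_left _ _).trans_lt (hclosed β hβ), ?_, ?_⟩
  · have hN : {n : ℕ | (n : Ordinal) ∈ G α} = code t := by
      ext n
      rw [mem_ofPred_eq, ← hGα]
      exact (and_iff_left (hnat n)).trans natCast_mem_codeSet
    simp only [hN, Function.leftInverse_invFun hcode t]
  · ext β
    rw [mem_ofPred_eq, ← hGα, mem_inter_iff, omega0_add_mem_codeSet, mem_inter_iff, mem_Iio,
      mem_Iio]
    exact ⟨fun h => ⟨h.2.1, h.1⟩, fun h => ⟨h.2, h.1, hadd β h.2⟩⟩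

end Guessing

section Stages

variable {E : Type*} [TopologicalSpace E] {ι : ℕ → Type*} {π : ∀ i, E → ι i}

/-- A stage of the construction: a countable rich family and the point chosen in its union. -/
structure Stage (E : Type*) where
  sets : Set (Set E)
  point : E

/-- The conditions available after the stages `f k`: their members and the nonempty clopen sets. -/
def earlierSets {κ : Type*} (f : κ → Stage E) : Set (Set E) :=
  clopenParts {univ} ∪ ⋃ k, (f k).sets

/-- The family of `s` is a countable rich family that refines those of the stages `f k`. -/
structure IsExtension (π : ∀ i, E → ι i) {κ : Type*} (f : κ → Stage E) (s : Stage E) : Prop where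
  countable : s.sets.Countable
  isRichFamily : IsRichFamily π s.sets
  isCoinitialFor : IsCoinitialFor (earlierSets f) s.sets
  sUnion_subset : ∀ k, ⋃₀ s.sets ⊆ ⋃₀ (f k).sets

/-- `s` is an extension of the stages `f k` which takes care of two guesses. Its point is new and
agrees with `z` in infinitely many colours. If `J` is an ω-cover of the earlier points with index in
`A`, then a sequence in `J` converges to these points and to all points of the union of `s.sets`
that cannot be separated from them by a condition. -/
structure IsStage (π : ∀ i, E → ι i) {κ : Type*} (f : κ → Stage E) (J : Set (Set E)) (A : Set κ)
    (z : E) (s : Stage E) : Prop extends IsExtension π f s where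
  point_mem : s.point ∈ ⋃₀ s.sets
  point_ne : ∀ k, s.point ≠ (f k).point
  frequently_eq : ∃ᶠ i in atTop, π i s.point = π i z
  exists_seq : IsOmegaCover J ((fun k => (f k).point) '' A) → ∃ D : ℕ → Set E,
    (∀ n, D n ∈ J) ∧ (∀ k ∈ A, ∀ᶠ n in atTop, (f k).point ∈ D n) ∧
    ∀ x ∈ ⋃₀ s.sets, (∀ᶠ n in atTop, x ∈ D n) ∨
      ∃ Q ∈ earlierSets f, x ∈ Q ∧ Disjoint Q ((fun k => (f k).point) '' A)

section Extension

variable {κ : Type*} [LinearOrder κ] {f : κ → Stage E} {a : κ}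

theorem isOpenDense_powerset_sUnion (hf : ∀ b < a, IsExtension π ((Iio b).domRestrict f) (f b))
    {b : κ} (hb : b < a) :
    IsOpenDense (earlierSets ((Iio a).domRestrict f)) (𝒫 ⋃₀ (f b).sets) := by
  refine ⟨fun _ _ hle h => hle.trans h, fun P hP => ?_⟩
  have hbelow (hP : P ∈ earlierSets ((Iio b).domRestrict f)) :
      ∃ Q ∈ earlierSets ((Iio a).domRestrict f) ∩ 𝒫 ⋃₀ (f b).sets, Q ≤ P := by
    obtain ⟨Q, hQ, hQP⟩ := (hf b hb).isCoinitialFor hP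
    exact ⟨Q, ⟨Or.inr (mem_iUnion_of_mem ⟨b, hb⟩ hQ), subset_sUnion_of_mem hQ⟩, hQP⟩
  rcases hP with hP | hP
  · exact hbelow (Or.inl hP)
  obtain ⟨⟨c, hca⟩, hPc⟩ := mem_iUnion.1 hP
  rcases lt_or_ge c b with hcb | hbc
  · exact hbelow (Or.inr (mem_iUnion_of_mem ⟨c, hcb⟩ hPc))
  refine ⟨P, ⟨Or.inr hP, (subset_sUnion_of_mem hPc).trans ?_⟩, le_rfl⟩
  rcases hbc.eq_or_lt with rfl | hbc
  · exact Subset.rfl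
  · exact (hf c hca).sUnion_subset ⟨b, hbc⟩

variable [CompactSpace E] [T2Space E] [TotallyDisconnectedSpace E]

theorem isRichFamily_earlierSets (hrich : IsRich π univ)
    (hf : ∀ b < a, IsExtension π ((Iio b).domRestrict f) (f b)) :
    IsRichFamily π (earlierSets ((Iio a).domRestrict f)) :=
  (isRichFamily_clopenParts (by rintro _ rfl; exact isClosed_univ)
    (by rintro _ rfl; exact hrich)).union
    (.iUnion fun b => (hf b b.2).isRichFamily)

variable [SecondCountableTopology E]

theorem countable_earlierSets (ha : (Iio a).Countable)
    (hf : ∀ b < a, IsExtension π ((Iio b).domRestrict f) (f b)) :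
    (earlierSets ((Iio a).domRestrict f)).Countable := by
  have := ha.to_subtype
  exact (countable_clopenParts (countable_singleton _)).union
    (countable_iUnion fun b => (hf b b.2).countable)

theorem exists_isStage [Nonempty E] [∀ i, Nontrivial (ι i)] (hπ : ∀ i, IsLocallyConstant (π i))
    (hrich : IsRich π univ) (ha : (Iio a).Countable)
    (hf : ∀ b < a, IsExtension π ((Iio b).domRestrict f) (f b)) {J : Set (Set E)}
    (hJ : ∀ U ∈ J, IsOpen U) (A : Set (Iio a)) (z : E) :
    ∃ s, IsStage π ((Iio a).domRestrict f) J A z s := by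
  have := ha.to_subtype
  set Y := (fun b => ((Iio a).domRestrict f b).point) '' A
  obtain ⟨J', Y', hJ', hJY', hY', hJYeq⟩ : ∃ (J' : Set (Set E)) (Y' : Set E),
      (∀ U ∈ J', IsOpen U) ∧ IsOmegaCover J' Y' ∧ Y'.Countable ∧
      (IsOmegaCover J Y → J' = J ∧ Y' = Y) := by
    by_cases hJY : IsOmegaCover J Y
    · exact ⟨J, Y, hJ, hJY, A.to_countable.image _, fun _ => ⟨rfl, rfl⟩⟩
    · exact ⟨{univ}, ∅, by rintro _ rfl; exact isOpen_univ,
        fun F _ => ⟨univ, rfl, subset_univ _⟩, countable_empty, fun h => absurd h hJY⟩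
  obtain ⟨𝒯, hcount, h𝒯, hcoinit, hsub, D, hDJ, hDY, hD⟩ :=
    (isRichFamily_earlierSets hrich hf).exists_fusionFamily hπ (countable_earlierSets ha hf)
      (countable_range fun b : Iio a => 𝒫 ⋃₀ (f b).sets)
      (forall_mem_range.2 fun b => isOpenDense_powerset_sUnion hf b.2) hJ' hJY' hY'
  obtain ⟨p, hp, -⟩ := hcoinit (Or.inl ⟨univ_nonempty, univ, rfl, ⊤, (inter_univ _).symm⟩)
  obtain ⟨x, hxp, hxne, hxz⟩ := (h𝒯.isRich p hp).exists_notMem_frequently_eq hπ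
    (h𝒯.isClosed p hp) (h𝒯.nonempty p hp) (countable_range fun b : Iio a => (f b).point)
    fun i => π i z
  refine ⟨⟨𝒯, x⟩, ⟨hcount, h𝒯, hcoinit, fun b => (hsub _ (mem_range_self b)).trans ?_⟩,
    ⟨p, hp, hxp⟩, fun b hb => hxne ⟨b, hb.symm⟩, hxz, fun hJY => ?_⟩
  · exact sUnion_subset fun _ h => h
  · obtain ⟨rfl, rfl⟩ := hJYeq hJY
    exact ⟨D, hDJ, fun b hb => hDY _ (mem_image_of_mem _ hb), hD⟩

end Extension

theorem exists_forall_domRestrict_Iio {κ S : Type*} [Preorder κ] [WellFoundedLT κ] [Nonempty S]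
    (R : ∀ a : κ, (Iio a → S) → S → Prop)
    (hR : ∀ (a : κ) (f : κ → S), (∀ b < a, R b ((Iio b).domRestrict f) (f b)) →
      ∃ s, R a ((Iio a).domRestrict f) s) :
    ∃ f : κ → S, ∀ a, R a ((Iio a).domRestrict f) (f a) := by
  let f : κ → S := wellFounded_lt.fix fun a g => Classical.epsilon (R a fun b => g b b.2)
  have hf (a : κ) : f a = Classical.epsilon (R a ((Iio a).domRestrict f)) :=
    wellFounded_lt.fix_eq _ a
  refine ⟨f, fun a => ?_⟩
  induction a using WellFoundedLT.induction with
  | _ a ih =>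
    rw [hf a]
    exact Classical.epsilon_spec (hR a f ih)

theorem exists_forall_isStage [CompactSpace E] [T2Space E] [TotallyDisconnectedSpace E]
    [SecondCountableTopology E] [Nonempty E] [∀ i, Nontrivial (ι i)]
    (hπ : ∀ i, IsLocallyConstant (π i)) (hrich : IsRich π univ)
    {J : Ordinal.{0} → Set (Set E)} (hJ : ∀ α, ∀ U ∈ J α, IsOpen U)
    (A : Ordinal.{0} → Set Ordinal.{0}) (z : Ordinal.{0} → E) :
    ∃ f : Ordinal.{0} → Stage E, ∀ α < omega1,
      IsStage π ((Iio α).domRestrict f) (J α) ((↑) ⁻¹' A α) (z α) (f α) := by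
  have : Nonempty (Stage E) := ⟨⟨∅, Classical.arbitrary E⟩⟩
  refine exists_forall_domRestrict_Iio
    (fun α g s => α < omega1 → IsStage π g (J α) ((↑) ⁻¹' A α) (z α) s) fun α f hf => ?_
  by_cases hα : α < omega1
  · exact (exists_isStage hπ hrich (countable_Iio_of_lt_omega1 hα)
      (fun β hβ => (hf β hβ (hβ.trans hα)).toIsExtension) (hJ α) _ _).imp fun _ hs _ => hs
  · exact ⟨Classical.arbitrary _, fun h => absurd h hα⟩

end Stages

section GammaSets

open TopologicalSpace (Clopens)

theorem subset_iUnion_iInter_gt_iff {α : Type*} {Y : Set α} {D : ℕ → Set α} :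
    Y ⊆ ⋃ m, ⋂ n > m, D n ↔ ∀ y ∈ Y, ∀ᶠ n in atTop, y ∈ D n := by
  simp only [Set.subset_def, mem_iUnion, mem_iInter, atTop_basis_Ioi.eventually_iff, true_and,
    mem_Ioi]

variable {E : Type*} [TopologicalSpace E]

theorem IsOmegaCover.clopens [CompactSpace E] [T2Space E] [TotallyDisconnectedSpace E]
    {J : Set (Set E)} {Y : Set E} (hJ : ∀ U ∈ J, IsOpen U) (hJY : IsOmegaCover J Y) :
    IsOmegaCover ((↑) '' {K : Clopens E | ∃ U ∈ J, (K : Set E) ⊆ U}) Y := by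
  intro F hF
  obtain ⟨U, hU, hFU⟩ := hJY F hF
  obtain ⟨K, hK, hFK, hKU⟩ :=
    exists_clopen_of_closed_subset_open F.finite_toSet.isClosed (hJ U hU) hFU
  exact ⟨K, ⟨⟨K, hK⟩, ⟨U, hU, hKU⟩, rfl⟩, hFK⟩

theorem exists_injective_code [CompactSpace E] [T2Space E] [TotallyDisconnectedSpace E]
    [SecondCountableTopology E] :
    ∃ code : Set (Clopens E) × E → Set ℕ, Function.Injective code := by
  have : Countable (Clopens E) := Clopens.countable_iff_secondCountable.2 inferInstance
  obtain ⟨e, he⟩ := exists_injective_nat (Clopens E ⊕ Clopens E)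
  refine ⟨fun p => e '' (Sum.inl '' p.1 ∪ Sum.inr '' {K | p.2 ∈ K}), ?_⟩
  rintro ⟨𝒥, x⟩ ⟨𝒦, y⟩ heq
  have hunion := image_injective.2 he heq
  refine Prod.ext ?_ (by_contra fun hxy => ?_)
  · ext K
    simpa using! Set.ext_iff.1 hunion (Sum.inl K)
  · obtain ⟨K, hK, hxK, hKy⟩ :=
      compact_exists_isClopen_in_isOpen isOpen_compl_singleton (mem_compl_singleton_iff.2 hxy)
    have hiff : x ∈ (⟨K, hK⟩ : Clopens E) ↔ y ∈ (⟨K, hK⟩ : Clopens E) := by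
      simpa using! Set.ext_iff.1 hunion (Sum.inr ⟨K, hK⟩)
    exact hKy (hiff.1 hxK) rfl

theorem exists_reflecting_bound [CompactSpace E] [T2Space E] [TotallyDisconnectedSpace E]
    [SecondCountableTopology E] {f : Ordinal.{0} → Stage E}
    (hf : ∀ α < omega1, (f α).sets.Countable) (x : Ordinal.{0} → E)
    {A : Set Ordinal.{0}} (hA : A ⊆ Iio omega1) :
    ∃ g : Ordinal.{0} → Ordinal.{0}, (∀ β < omega1, g β < omega1) ∧
      ∀ α, 0 < α → α < omega1 → (∀ β < α, g β < α) →
        ∀ Q ∈ earlierSets ((Iio α).domRestrict f),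
          Disjoint Q (x '' (A ∩ Iio α)) → Disjoint Q (x '' A) := by
  have hbound (β : Ordinal.{0}) (hβ : β < omega1) :=
    exists_lt_omega1_disjoint
      ((countable_clopenParts (countable_singleton univ)).union (hf β hβ)) x hA
  choose! g hg hgQ using hbound
  refine ⟨g, hg, fun α h0 hα hclosed Q hQ hdisj => ?_⟩
  have hreflect (β) (hβ : β < α) (hQβ : Q ∈ clopenParts {univ} ∪ (f β).sets) :
      Disjoint Q (x '' A) :=
    hgQ β (hβ.trans hα) Q hQβ <| hdisj.mono_right <| image_mono <|
      inter_subset_inter_right A (Iio_subset_Iio (hclosed β hβ).le)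
  rcases hQ with hQ | hQ
  · exact hreflect 0 h0 (Or.inl hQ)
  · obtain ⟨⟨β, hβ⟩, hQβ⟩ := mem_iUnion.1 hQ
    exact hreflect β hβ (Or.inr hQβ)

variable {ι : ℕ → Type*} {π : ∀ i, E → ι i}

theorem IsStage.exists_seq_forall {κ : Type*} [LinearOrder κ] {f : κ → Stage E} {a : κ}
    {J : Set (Set E)} {A : Set κ} {z : E}
    (hs : IsStage π ((Iio a).domRestrict f) J ((↑) ⁻¹' A) z (f a))
    (hJ : IsOmegaCover J ((fun b => (f b).point) '' A))
    (hreflect : ∀ Q ∈ earlierSets ((Iio a).domRestrict f),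
      Disjoint Q ((fun b => (f b).point) '' (A ∩ Iio a)) →
        Disjoint Q ((fun b => (f b).point) '' A))
    (hmem : ∀ b ∈ A, a ≤ b → (f b).point ∈ ⋃₀ (f a).sets) :
    ∃ D : ℕ → Set E, (∀ n, D n ∈ J) ∧ ∀ b ∈ A, ∀ᶠ n in atTop, (f b).point ∈ D n := by
  have himage : (fun b : Iio a => ((Iio a).domRestrict f b).point) '' ((↑) ⁻¹' A) =
      (fun b => (f b).point) '' (A ∩ Iio a) := by
    rw [inter_comm, ← Subtype.image_preimage_coe, image_image]
    rfl
  have hseq := hs.exists_seq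
  rw [himage] at hseq
  obtain ⟨D, hDJ, hDlt, hD⟩ := hseq fun F hF => hJ F (hF.trans (image_mono inter_subset_left))
  refine ⟨D, hDJ, fun b hb => ?_⟩
  rcases lt_or_ge b a with hba | hab
  · exact hDlt ⟨b, hba⟩ hb
  · refine (hD _ (hmem b hb hab)).resolve_right ?_
    rintro ⟨Q, hQ, hbQ, hdisj⟩
    exact disjoint_left.1 (hreflect Q hQ hdisj) hbQ ⟨b, hb, rfl⟩

theorem isGammaSet_of_isStage [CompactSpace E] [T2Space E] [TotallyDisconnectedSpace E]
    [SecondCountableTopology E] {f : Ordinal.{0} → Stage E} {J : Ordinal.{0} → Set (Set E)}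
    {B : Ordinal.{0} → Set Ordinal.{0}} {z : Ordinal.{0} → E}
    (hf : ∀ α < omega1, IsStage π ((Iio α).domRestrict f) (J α) ((↑) ⁻¹' B α) (z α) (f α))
    (hguess : ∀ 𝒥 : Set (Clopens E), ∀ A ⊆ Iio omega1, ∀ g : Ordinal.{0} → Ordinal.{0},
      (∀ β < omega1, g β < omega1) → ∃ α < omega1, 0 < α ∧ (∀ β < α, g β < α) ∧
        J α = (↑) '' 𝒥 ∧ B α = A ∩ Iio α)
    {Y : Set E} (hY : Y ⊆ (fun α => (f α).point) '' Iio omega1) : IsGammaSet Y := by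
  intro J' hJ' hJY
  obtain ⟨A, hA, rfl⟩ := subset_image_iff.1 hY
  obtain ⟨g, hg, hreflect⟩ := exists_reflecting_bound (fun α hα => (hf α hα).countable)
    (fun α => (f α).point) hA
  obtain ⟨α, hα, h0, hclosed, hJα, hBα⟩ :=
    hguess {K | ∃ U ∈ J', (K : Set E) ⊆ U} A hA g hg
  have hs := hf α hα
  rw [hJα, hBα, Subtype.preimage_coe_inter_self] at hs
  have hmem (β) (hβ : β ∈ A) (hαβ : α ≤ β) : (f β).point ∈ ⋃₀ (f α).sets := by
    rcases hαβ.eq_or_lt with rfl | hlt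
    · exact hs.point_mem
    · have hsβ := hf β (hA hβ)
      exact hsβ.sUnion_subset ⟨α, hlt⟩ hsβ.point_mem
  obtain ⟨D, hD, hDA⟩ :=
    hs.exists_seq_forall (hJY.clopens hJ') (hreflect α h0 hα hclosed) hmem
  choose K hK hKD using hD
  choose U hU hKU using hK
  refine ⟨U, hU, subset_iUnion_iInter_gt_iff.2 <| forall_mem_image.2 fun β hβ => ?_⟩
  filter_upwards [hDA β hβ] with n hn
  exact hKU n (hKD n ▸ hn)

theorem mk_image_Iio_omega1 {E : Type*} {x : Ordinal.{0} → E} (hx : InjOn x (Iio omega1)) :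
    Cardinal.mk (x '' Iio omega1) = Cardinal.aleph 1 := by
  have hmk := Cardinal.mk_image_eq_of_injOn_lift x (Iio omega1) hx
  have hcard : omega1.card = Cardinal.aleph 1 := Cardinal.card_ord _
  rw [Cardinal.mk_Iio_ordinal, hcard] at hmk
  simpa using hmk

theorem hereditary_gammaSet_not_stronglyMeager_of_diamond_general (hd : DiamondPrinciple)
    [CompactSpace E] [T2Space E] [TotallyDisconnectedSpace E] [SecondCountableTopology E]
    [Nonempty E] [∀ i, Nontrivial (ι i)] (hπ : ∀ i, IsLocallyConstant (π i))
    (hrich : IsRich π univ) :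
    ∃ X : Set E, Cardinal.mk X = Cardinal.aleph 1 ∧ (∀ Y ⊆ X, IsGammaSet Y) ∧
      ∀ z, ∃ x ∈ X, ∃ᶠ i in atTop, π i x = π i z := by
  obtain ⟨code, hcode⟩ := exists_injective_code (E := E)
  obtain ⟨s, B, hguess⟩ := hd.exists_guess hcode
  obtain ⟨f, hf⟩ := exists_forall_isStage hπ hrich
    (J := fun α => (↑) '' (s α).1) (fun α => forall_mem_image.2 fun K _ => K.isOpen) B
    fun α => (s α).2
  refine ⟨(fun α => (f α).point) '' Iio omega1,
    mk_image_Iio_omega1 <| injOn_iff_injective.2 <| .of_lt_imp_ne fun β α hβα =>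
      ((hf α α.2).point_ne ⟨β, hβα⟩).symm,
    fun Y hY => isGammaSet_of_isStage hf (fun 𝒥 A hA g hg => ?_) hY, fun z => ?_⟩
  · obtain ⟨α, hα, h0, hclosed, hsα, hBα⟩ := hguess (𝒥, Classical.arbitrary E) A hA g hg
    exact ⟨α, hα, h0, hclosed, by rw [hsα], hBα⟩
  · obtain ⟨α, hα, -, -, hsα, -⟩ := hguess (∅, z) ∅ (empty_subset _) id fun β hβ => hβ
    exact ⟨(f α).point, mem_image_of_mem _ hα, by simpa only [hsα] using (hf α hα).frequently_eq⟩

end GammaSets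

section CantorSpace

/-- The blocks `[k_n, k_{n+1})` of coordinates as colourings of the Cantor space. -/
def block (n : ℕ) : Cantor → Ico (kseq n) (kseq (n + 1)) → ZMod 2 :=
  (Ico (kseq n) (kseq (n + 1))).domRestrict

theorem le_kseq (n : ℕ) : n ≤ kseq n :=
  Nat.le_sub_one_of_lt (n.lt_two_pow_self.trans (Nat.pow_lt_pow_succ one_lt_two))

theorem kseq_lt_kseq_succ (n : ℕ) : kseq n < kseq (n + 1) := by
  have := n.two_pow_pos
  simp only [kseq, pow_succ]
  omega

theorem mem_Gset {x : Cantor} : x ∈ Gset ↔ ∃ᶠ n in atTop, x ∈ Aset n := by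
  simp only [Gset, mem_iInter, mem_iUnion, exists_prop, atTop_basis_Ioi.frequently_iff,
    true_imp_iff, mem_Ioi, gt_iff_lt]

theorem sub_mem_Aset_iff {x z : Cantor} {n : ℕ} : z - x ∈ Aset n ↔ block n x = block n z := by
  simp only [Aset, block, mem_ofPred_eq, funext_iff, Subtype.forall, domRestrict_apply,
    Pi.sub_apply, sub_eq_zero, eq_comm]

instance nonempty_Ico_kseq (n : ℕ) : Nonempty (Ico (kseq n) (kseq (n + 1))) :=
  (nonempty_Ico.2 (kseq_lt_kseq_succ n)).to_subtype

theorem isLocallyConstant_block (n : ℕ) : IsLocallyConstant (block n) :=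
  (IsLocallyConstant.iff_continuous (block n)).2 (Pi.continuous_domRestrict _)

theorem isRich_block : IsRich block univ := by
  rintro U hU ⟨x, -, hxU⟩
  obtain ⟨_, ⟨y, n, rfl⟩, -, hyU⟩ :=
    (PiNat.isTopologicalBasis_cylinders _).exists_subset_of_mem_open hxU hU
  refine (eventually_atTop.2 ⟨n, fun i hi t _ => ?_⟩).frequently
  refine ⟨Function.extend Subtype.val t y, ⟨mem_univ _, hyU fun j hj => ?_⟩,
    funext fun j => Subtype.val_injective.extend_apply t y j⟩
  refine Function.extend_apply' t y j ?_
  rintro ⟨k, rfl⟩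
  exact hj.not_ge ((hi.trans (le_kseq i)).trans k.2.1)

theorem measure_Aset_le {μ : Measure Cantor} (hμ : IsCantorProductMeasure μ) (n : ℕ) :
    μ (Aset n) ≤ (2 : ℝ≥0∞)⁻¹ ^ n := by
  have hA : Aset n = {x | ∀ i ∈ Finset.Ico (kseq n) (kseq (n + 1)), x i = (0 : Cantor) i} := by
    simp only [Aset, Finset.mem_Ico, mem_Ico, Pi.zero_apply]
  have hcard : n ≤ (Finset.Ico (kseq n) (kseq (n + 1))).card := by
    have := n.lt_two_pow_self
    rw [Nat.card_Ico]
    simp only [kseq, pow_succ]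
    omega
  rw [hA, hμ]
  exact pow_le_pow_right_of_le_one' (ENNReal.inv_le_one.2 one_le_two) hcard

theorem measure_Gset_eq_zero {μ : Measure Cantor} (hμ : IsCantorProductMeasure μ) :
    μ Gset = 0 := by
  have hsum : ∑' n, μ {x | x ∈ Aset n} ≠ ∞ := by
    refine ne_top_of_le_ne_top ?_ (ENNReal.tsum_le_tsum (measure_Aset_le hμ))
    rw [ENNReal.tsum_geometric]
    simp
  exact measure_mono_null (fun x hx => mem_Gset.1 hx) (measure_setOfPred_frequently_eq_zero hsum)

end CantorSpace

/-- **Theorem 2.** Assume `◊`. Then there is a set `X ⊆ 2^ω` of cardinality `ℵ₁` which is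
a hereditary γ-set (every subset is a γ-set) but is not strongly meager: there is a null
set `G` (for the product measure) with `X + G = 2^ω`. -/
theorem hereditary_gammaSet_not_stronglyMeager_of_diamond (hd : DiamondPrinciple) :
    ∃ X : Set Cantor, Cardinal.mk X = Cardinal.aleph 1 ∧
      (∀ Y ⊆ X, IsGammaSet Y) ∧
      ∃ G : Set Cantor, (∀ μ : Measure Cantor, IsCantorProductMeasure μ → μ G = 0) ∧
        X + G = Set.univ := by
  obtain ⟨X, hcard, hγ, hX⟩ := hereditary_gammaSet_not_stronglyMeager_of_diamond_general hd
    isLocallyConstant_block isRich_block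
  refine ⟨X, hcard, hγ, Gset, fun _ hμ => measure_Gset_eq_zero hμ, eq_univ_of_forall fun z => ?_⟩
  obtain ⟨x, hx, hfreq⟩ := hX z
  have hG : z - x ∈ Gset := mem_Gset.2 (hfreq.mono fun n => sub_mem_Aset_iff.2)
  exact mem_add.2 ⟨x, hx, z - x, hG, add_sub_cancel x z⟩
end

section
/- Assume that 𝔭 = 2^ℵ₀, i.e., every family F of infinite subsets of ω with |F| < 2^ℵ₀ such that every finite subfamily of F has infinite intersection admits an infinite pseudo-intersection. Then there exists a set Y ⊆ ℝ which is a γ-set (in the subspace topology of ℝ) and a Lebesgue measure-zero set G' ⊆ ℝ such that Y + G' = ℝ; in particular, Y is a γ-set of reals which is not strongly meager. -/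
open Set MeasureTheory Filter Pointwise
open scoped ENNReal

/-!
Cut `ω` into consecutive blocks and, by transfinite recursion, choose a tower `(A_t)` of infinite
sets of block indices, decreasing modulo finite sets. Let `x_t` agree with a prescribed target
`w_t` on the blocks with index in `A_t` and vanish elsewhere; the set in question is
`X = {x_t} ∪ Q`, where `Q` is the set of eventually zero sequences. Each stage is also assigned one
of the `2^ℵ₀` families of basic open sets. If this family is an ω-cover of `Q` and the earlier
points, it contains a γ-sequence for them, because a set of fewer than `𝔭` reals is a γ-set.
By compactness, shrinking `A_t` forces a subsequence to capture every sequence supported on the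
blocks in `A_t` up to finitely many, hence all later points. So `X` is a γ-set.

As the targets `w_t` exhaust all sequences, every sequence agrees with a member of `X` on
infinitely many blocks. If the blocks are `[k, k²)`, two reals whose digits agree on infinitely
many blocks differ by a rational or a Liouville number. Hence adding the null set of these numbers
to the reals with digit sequences in `X` gives all of `ℝ`.
-/

open scoped Cardinal

/-- `A` is almost contained in `B`: all but finitely many elements of `A` lie in `B`. -/
def AlmostSubset {α : Type*} (A B : Set α) : Prop := (A \ B).Finite

infix:50 " ⊆* " => AlmostSubset

namespace AlmostSubset

variable {α ι : Type*} {A B C : Set α}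

lemma of_subset (h : A ⊆ B) : A ⊆* B := by
  simp [AlmostSubset, sdiff_eq_empty.2 h]

lemma of_finite (h : A.Finite) : A ⊆* B := h.subset sdiff_subset

lemma trans (hAB : A ⊆* B) (hBC : B ⊆* C) : A ⊆* C :=
  (hAB.union hBC).subset fun x hx ↦ by
    by_cases hxB : x ∈ B
    · exact Or.inr ⟨hxB, hx.2⟩
    · exact Or.inl ⟨hx.1, hxB⟩

lemma infinite (hAB : A ⊆* B) (hA : A.Infinite) : B.Infinite := fun hB ↦
  hA <| (hAB.union hB).subset fun x hx ↦ by
    by_cases hxB : x ∈ B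
    · exact Or.inr hxB
    · exact Or.inl ⟨hx, hxB⟩

lemma biInter {B : ι → Set α} (S : Finset ι) (h : ∀ i ∈ S, A ⊆* B i) :
    A ⊆* ⋂ i ∈ S, B i := by
  refine (S.finite_toSet.biUnion h).subset ?_
  rintro x ⟨hxA, hx⟩
  simpa [hxA] using hx

end AlmostSubset

lemma infinite_biInter_of_almostSubset {I α : Type*} [Infinite α] [LinearOrder I]
    {A : I → Set α} (hinf : ∀ i, (A i).Infinite) (hdec : ∀ i j, i < j → A j ⊆* A i)
    (S : Finset I) : (⋂ i ∈ S, A i).Infinite := by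
  obtain rfl | hS := S.eq_empty_or_nonempty
  · simpa using infinite_univ
  · refine (AlmostSubset.biInter S fun i hi ↦ ?_).infinite (hinf (S.max' hS))
    obtain h | h := (S.le_max' i hi).eq_or_lt
    · exact .of_subset (h ▸ subset_rfl)
    · exact hdec _ _ h

lemma exists_forall_of_exists_extension {T X : Type*} [Preorder T] [WellFoundedLT T] [Nonempty X]
    (P : ∀ t : T, (Iio t → X) → X → Prop)
    (hP : ∀ (t : T) (f : Iio t → X),
      (∀ s : Iio t, P s (fun r ↦ f ⟨r, r.2.trans s.2⟩) (f s)) → ∃ x, P t f x) :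
    ∃ f : T → X, ∀ t, P t (fun s ↦ f s) (f t) := by
  let f : T → X := WellFoundedLT.fix fun t rec ↦ Classical.epsilon (P t fun s ↦ rec s s.2)
  have hf (t : T) : f t = Classical.epsilon (P t fun s ↦ f s) := WellFoundedLT.fix_eq _ t
  refine ⟨f, fun t ↦ ?_⟩
  induction t using WellFoundedLT.induction with
  | ind t ih =>
    rw [hf t]
    exact Classical.epsilon_spec (hP t _ fun s ↦ ih s s.2)

lemma PseudoIntersectionNumberEqContinuum.exists_almostSubset
    (hp : PseudoIntersectionNumberEqContinuum) {I : Type} (hI : #I < 2 ^ ℵ₀) {C : I → Set ℕ}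
    (hC : ∀ S : Finset I, (⋂ i ∈ S, C i).Infinite) :
    ∃ A : Set ℕ, A.Infinite ∧ ∀ i, A ⊆* C i := by
  classical
  have hinf : ∀ B ∈ range C, B.Infinite := by
    rintro _ ⟨i, rfl⟩
    simpa using hC {i}
  have hfip (G : Finset (Set ℕ)) (hG : ↑G ⊆ range C) : (⋂₀ (G : Set (Set ℕ))).Infinite := by
    rw [← image_univ] at hG
    obtain ⟨S, -, rfl⟩ := Finset.subset_set_image_iff.1 hG
    simpa using hC S
  obtain ⟨A, hA, hAC⟩ := hp (range C) (Cardinal.mk_range_le.trans_lt hI) hinf hfip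
  exact ⟨A, hA, fun i ↦ hAC _ ⟨i, rfl⟩⟩

/-- `D` is a γ-sequence for `X`: every point of `X` lies in all but finitely many `D n`. -/
def IsGammaSeq {α : Type*} (D : ℕ → Set α) (X : Set α) : Prop :=
  ∀ x ∈ X, ∀ᶠ n in atTop, x ∈ D n

/-- An ω-network of a space: every finite set can be separated from the complement of any of its
open neighbourhoods by a member of the family. -/
def IsOmegaNetwork {α : Type*} [TopologicalSpace α] (V : Set (Set α)) : Prop :=
  ∀ (F : Finset α) (U : Set α), IsOpen U → ↑F ⊆ U → ∃ W ∈ V, ↑F ⊆ W ∧ W ⊆ U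

section Gamma

variable {α β : Type*} {D : ℕ → Set α} {X : Set α}

lemma isGammaSeq_iff_subset_iUnion_iInter :
    IsGammaSeq D X ↔ X ⊆ ⋃ m, ⋂ n > m, D n := by
  refine forall₂_congr fun x _ ↦ ?_
  simp only [(atTop_basis_Ioi (α := ℕ)).eventually_iff, mem_iUnion, mem_iInter, mem_Ioi,
    true_and, gt_iff_lt]

variable [TopologicalSpace α] [TopologicalSpace β]

lemma isGammaSet_iff_exists_isGammaSeq :
    IsGammaSet X ↔ ∀ J : Set (Set α), (∀ U ∈ J, IsOpen U) → IsOmegaCover J X →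
      ∃ D : ℕ → Set α, (∀ n, D n ∈ J) ∧ IsGammaSeq D X := by
  simp only [IsGammaSet, isGammaSeq_iff_subset_iUnion_iInter]

lemma IsGammaSet.image (hX : IsGammaSet X) {f : α → β} (hf : Continuous f) :
    IsGammaSet (f '' X) := by
  classical
  rw [isGammaSet_iff_exists_isGammaSeq] at hX ⊢
  intro J hJ hcov
  have hcov' : IsOmegaCover (preimage f '' J) X := fun F hF ↦ by
    obtain ⟨U, hU, hFU⟩ := hcov (F.image f) (by simpa using image_mono hF)
    exact ⟨_, mem_image_of_mem _ hU, by simpa using hFU⟩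
  obtain ⟨D, hD, hXD⟩ := hX _ (forall_mem_image.2 fun U hU ↦ (hJ U hU).preimage hf) hcov'
  choose E hE hED using hD
  exact ⟨E, hE, forall_mem_image.2 fun x hx ↦ by simpa [← hED] using hXD x hx⟩

lemma exists_countable_isOpen_isOmegaNetwork (α : Type*) [TopologicalSpace α]
    [SecondCountableTopology α] :
    ∃ V : Set (Set α), V.Countable ∧ (∀ W ∈ V, IsOpen W) ∧ IsOmegaNetwork V := by
  obtain ⟨B, hBc, -, hB⟩ := TopologicalSpace.exists_countable_basis α
  refine ⟨sUnion '' {S | S.Finite ∧ S ⊆ B}, (countable_ofPred_finite_subset hBc).image _, ?_, ?_⟩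
  · rintro _ ⟨S, ⟨-, hSB⟩, rfl⟩
    exact isOpen_sUnion fun W hW ↦ hB.isOpen (hSB hW)
  · intro F U hU hFU
    have hbasis (x : F) : ∃ W ∈ B, x.1 ∈ W ∧ W ⊆ U :=
      hB.exists_subset_of_mem_open (hFU x.2) hU
    choose W hWB hxW hWU using hbasis
    exact ⟨_, ⟨range W, ⟨finite_range W, range_subset_iff.2 hWB⟩, rfl⟩,
      fun x hx ↦ ⟨_, ⟨⟨x, hx⟩, rfl⟩, hxW ⟨x, hx⟩⟩, sUnion_subset (forall_mem_range.2 hWU)⟩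

lemma IsOmegaNetwork.isGammaSet {V : Set (Set α)} (hV : IsOmegaNetwork V)
    (h : ∀ J ⊆ V, IsOmegaCover J X → ∃ D : ℕ → Set α, (∀ n, D n ∈ J) ∧ IsGammaSeq D X) :
    IsGammaSet X := by
  rw [isGammaSet_iff_exists_isGammaSeq]
  intro J hJ hcov
  have hrefine : IsOmegaCover {W ∈ V | ∃ U ∈ J, W ⊆ U} X := fun F hF ↦ by
    obtain ⟨U, hU, hFU⟩ := hcov F hF
    obtain ⟨W, hW, hFW, hWU⟩ := hV F U (hJ U hU) hFU
    exact ⟨W, ⟨hW, U, hU, hWU⟩, hFW⟩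
  obtain ⟨D, hD, hDX⟩ := h _ (sep_subset _ _) hrefine
  choose E hE hDE using fun n ↦ (hD n).2
  exact ⟨E, hE, fun x hx ↦ (hDX x hx).mono fun n hn ↦ hDE n hn⟩

end Gamma

namespace PseudoIntersectionNumberEqContinuum

lemma exists_isGammaSeq (hp : PseudoIntersectionNumberEqContinuum) {α : Type} {J : Set (Set α)}
    (hJ : J.Countable) {X : Set α} (hX : #X < 2 ^ ℵ₀) (hcov : IsOmegaCover J X) :
    ∃ D : ℕ → Set α, (∀ n, D n ∈ J) ∧ IsGammaSeq D X := by
  obtain ⟨U₀, hU₀, -⟩ := hcov ∅ (by simp)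
  obtain ⟨U, rfl⟩ := hJ.exists_eq_range ⟨U₀, hU₀⟩
  -- Each cover member must recur infinitely often: it may be the only one containing `X`.
  let C (x : X) : Set ℕ := {n | x.1 ∈ U n.unpair.1}
  have hC (S : Finset X) : (⋂ x ∈ S, C x).Infinite := by
    obtain ⟨_, ⟨k, rfl⟩, hSU⟩ := hcov (S.map (.subtype _)) (by simp)
    refine (infinite_range_of_injective (f := Nat.pair k) fun a b h ↦ ?_).mono ?_
    · exact (Nat.pair_eq_pair.1 h).2
    · rintro _ ⟨j, rfl⟩
      simpa [C] using fun x hx hxS ↦ hSU (by simpa using ⟨hx, hxS⟩)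
  obtain ⟨A, hA, hAC⟩ := hp.exists_almostSubset hX hC
  let e : ℕ ↪ A := hA.natEmbedding
  refine ⟨fun n ↦ U (e n).1.unpair.1, fun n ↦ ⟨_, rfl⟩, fun x hx ↦ ?_⟩
  rw [← Nat.cofinite_eq_atTop, eventually_cofinite]
  exact ((hAC ⟨x, hx⟩).preimage (Subtype.val_injective.comp e.injective).injOn).subset
    fun n hn ↦ ⟨(e n).2, hn⟩

lemma isGammaSet_of_mk_lt (hp : PseudoIntersectionNumberEqContinuum) {α : Type}
    [TopologicalSpace α] [SecondCountableTopology α] {X : Set α} (hX : #X < 2 ^ ℵ₀) :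
    IsGammaSet X := by
  obtain ⟨V, hVc, -, hV⟩ := exists_countable_isOpen_isOmegaNetwork α
  exact hV.isGammaSet fun J hJV hcov ↦ hp.exists_isGammaSeq (hVc.mono hJV) hX hcov

end PseudoIntersectionNumberEqContinuum

/-- The eventually zero sequences, the countable dense set playing the role of the rationals. -/
def eventuallyZero (E : Type*) [Zero E] : Set (ℕ → E) := {z | ∀ᶠ i in atTop, z i = 0}

/-- With `ℕ` cut into the blocks `ℓ ⁻¹' {n}`, the indices of the blocks on which `z` does not
vanish. -/
def blockSupport {E : Type*} [Zero E] (ℓ : ℕ → ℕ) (z : ℕ → E) : Set ℕ := ℓ '' Function.support z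

/-- The sequences vanishing on all but finitely many of the blocks with index outside `B`. -/
def almostSupported (E : Type*) [Zero E] (ℓ : ℕ → ℕ) (B : Set ℕ) : Set (ℕ → E) :=
  {z | blockSupport ℓ z ⊆* B}

section Blocks

variable {E : Type*} [Zero E] {ℓ : ℕ → ℕ} {B C : Set ℕ}

lemma eventuallyZero_subset_almostSupported : eventuallyZero E ⊆ almostSupported E ℓ B := by
  intro z hz
  rw [eventuallyZero, mem_ofPred_eq, ← Nat.cofinite_eq_atTop, eventually_cofinite] at hz
  exact .of_finite (hz.image ℓ)

lemma indicator_mem_almostSupported (w : ℕ → E) (h : B ⊆* C) :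
    (ℓ ⁻¹' B).indicator w ∈ almostSupported E ℓ C := by
  refine AlmostSubset.trans (.of_subset ?_) h
  rintro _ ⟨i, hi, rfl⟩
  exact Set.support_indicator_subset (s := ℓ ⁻¹' B) hi

lemma finite_setOfPred_forall_eq_zero [Finite E] {S : Set ℕ} (hS : S.Finite) :
    {z : ℕ → E | ∀ i ∉ S, z i = 0}.Finite := by
  have := hS.to_subtype
  refine Set.Finite.of_finite_image (f := S.domRestrict) (toFinite _) fun z hz z' hz' h ↦ ?_
  ext i
  by_cases hi : i ∈ S
  · exact congr_fun h ⟨i, hi⟩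
  · rw [hz i hi, hz' i hi]

lemma countable_eventuallyZero [Finite E] : (eventuallyZero E).Countable := by
  refine (countable_iUnion fun n : ℕ ↦
    (finite_setOfPred_forall_eq_zero (E := E) (finite_Iio n)).countable).mono fun z hz ↦ ?_
  obtain ⟨N, hN⟩ := eventually_atTop.1 hz
  exact mem_iUnion.2 ⟨N, fun i hi ↦ hN i (not_lt.1 hi)⟩

lemma exists_setOfPred_forall_eq_zero_subset [Finite E] [TopologicalSpace E] [DiscreteTopology E]
    (hℓ : Tendsto ℓ atTop atTop) {D : ℕ → Set (ℕ → E)} (hDo : ∀ n, IsOpen (D n))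
    (hD : IsGammaSeq D (eventuallyZero E)) (k : ℕ) :
    ∃ n ≥ k, ∃ l, {z : ℕ → E | ∀ i, ℓ i ∈ Ico k l → z i = 0} ⊆ D n := by
  let K : Set (ℕ → E) := {z | ∀ i, k ≤ ℓ i → z i = 0}
  have hKfin : K.Finite := by
    have hS : {i | ¬ k ≤ ℓ i}.Finite := by
      simpa [← Nat.cofinite_eq_atTop, eventually_cofinite] using hℓ.eventually_ge_atTop k
    simpa using finite_setOfPred_forall_eq_zero (E := E) hS
  have hKD : ∀ᶠ n in atTop, ∀ z ∈ K, z ∈ D n := (eventually_all_finite hKfin).2 fun z hz ↦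
    hD z ((hℓ.eventually_ge_atTop k).mono hz)
  obtain ⟨n, hn, hkn⟩ := (hKD.and (eventually_ge_atTop k)).exists
  let V (l : ℕ) : Set (ℕ → E) := {z | ∀ i, ℓ i ∈ Ico k l → z i = 0}
  have hVanti : Antitone V := fun l l' hl z hz i hi ↦ hz i ⟨hi.1, hi.2.trans_le hl⟩
  have hVclosed (l : ℕ) : IsClosed (V l) := by
    simp only [V, ofPred_forall]
    exact isClosed_iInter fun i ↦ isClosed_iInter fun _ ↦
      isClosed_eq (continuous_apply i) continuous_const
  have hVK : ⋂ l, V l ⊆ K := fun z hz i hi ↦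
    mem_iInter.1 hz (ℓ i + 1) i ⟨hi, Nat.lt_succ_self _⟩
  exact ⟨n, hkn, exists_subset_nhds_of_compactSpace hVanti.directed_ge hVclosed
    fun z hz ↦ (hDo n).mem_nhds (hn z (hVK hz))⟩

end Blocks

lemma exists_infinite_subset_disjoint_Ico {A : Set ℕ} (hA : A.Infinite) (κ : ℕ → ℕ) :
    ∃ B ⊆ A, B.Infinite ∧ ∃ l : ℕ → ℕ, StrictMono l ∧ ∀ j, Disjoint B (Ico (l j) (κ (l j))) := by
  choose a haA hκa using fun k ↦ hA.exists_gt (max k (κ k))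
  let l : ℕ → ℕ := fun j ↦ (fun k ↦ a k + 1)^[j] 0
  have hl (j : ℕ) : l (j + 1) = a (l j) + 1 := Function.iterate_succ_apply' _ _ _
  have hlmono : StrictMono l := strictMono_nat_of_lt_succ fun j ↦ by have := hκa (l j); grind
  have hamono : StrictMono fun j ↦ a (l j) := strictMono_nat_of_lt_succ fun j ↦ by
    have := hκa (l (j + 1)); grind
  refine ⟨range fun j ↦ a (l j), range_subset_iff.2 fun j ↦ haA _,
    infinite_range_of_injective hamono.injective, l, hlmono, fun j ↦ disjoint_left.2 ?_⟩
  rintro _ ⟨m, rfl⟩ ⟨hjm, hmj⟩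
  obtain h | h := lt_or_ge m j
  · have : l (m + 1) ≤ l j := hlmono.monotone h
    grind
  · have : a (l j) ≤ a (l m) := hamono.monotone h
    have := hκa (l j)
    grind

lemma exists_infinite_subset_isGammaSeq_almostSupported {E : Type*} [Zero E] [Finite E]
    [TopologicalSpace E] [DiscreteTopology E] {ℓ : ℕ → ℕ} (hℓ : Tendsto ℓ atTop atTop)
    {D : ℕ → Set (ℕ → E)} (hDo : ∀ n, IsOpen (D n)) (hD : IsGammaSeq D (eventuallyZero E))
    {A : Set ℕ} (hA : A.Infinite) :
    ∃ B ⊆ A, B.Infinite ∧ ∃ φ : ℕ → ℕ, Tendsto φ atTop atTop ∧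
      IsGammaSeq (D ∘ φ) (almostSupported E ℓ B) := by
  choose ν hν κ hκ using exists_setOfPred_forall_eq_zero_subset hℓ hDo hD
  obtain ⟨B, hBA, hB, l, hl, hBl⟩ := exists_infinite_subset_disjoint_Ico hA κ
  refine ⟨B, hBA, hB, ν ∘ l, tendsto_atTop_mono (fun j ↦ hν (l j)) hl.tendsto_atTop, fun z hz ↦ ?_⟩
  obtain ⟨N, hN⟩ := hz.bddAbove
  filter_upwards [hl.tendsto_atTop.eventually_gt_atTop N] with j hj
  refine hκ (l j) fun i hi ↦ by_contra fun hzi ↦ ?_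
  have hiB : ℓ i ∉ B := disjoint_right.1 (hBl j) hi
  exact (hj.trans_le hi.1).not_ge (hN ⟨mem_image_of_mem ℓ hzi, hiB⟩)

lemma mk_sequences_prod_powerset_le (E : Type) [Countable E] {α : Type} {V : Set α}
    (hV : V.Countable) : #((ℕ → E) × 𝒫 V) ≤ 2 ^ ℵ₀ := by
  have hE : #(ℕ → E) ≤ 2 ^ ℵ₀ := by
    simpa using Cardinal.power_le_power_right (c := ℵ₀) (Cardinal.mk_le_aleph0 (α := E))
  have hPV : #(𝒫 V) ≤ 2 ^ ℵ₀ := by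
    simpa using Cardinal.power_le_power_left two_ne_zero hV.le_aleph0
  simpa using mul_le_mul' hE hPV

/-- The demand that a family `J` puts on the set `B` chosen at its stage, where `F` is the set of
points constructed before: if `J` is an ω-cover of `F` and the eventually zero sequences, then it
contains a γ-sequence for `F` and all points that may be added later. -/
def Captures {E : Type*} [Zero E] (ℓ : ℕ → ℕ) (J : Set (Set (ℕ → E))) (F : Set (ℕ → E))
    (B : Set ℕ) : Prop :=
  IsOmegaCover J (F ∪ eventuallyZero E) →
    ∃ D : ℕ → Set (ℕ → E), (∀ n, D n ∈ J) ∧ IsGammaSeq D (F ∪ almostSupported E ℓ B)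

namespace PseudoIntersectionNumberEqContinuum

variable {E : Type} [Zero E] [Finite E] [TopologicalSpace E] [DiscreteTopology E] {ℓ : ℕ → ℕ}

lemma exists_infinite_subset_captures (hp : PseudoIntersectionNumberEqContinuum)
    (hℓ : Tendsto ℓ atTop atTop) {J : Set (Set (ℕ → E))} (hJ : ∀ U ∈ J, IsOpen U)
    {F : Set (ℕ → E)} (hF : #F < 2 ^ ℵ₀) {A : Set ℕ} (hA : A.Infinite) :
    ∃ B ⊆ A, B.Infinite ∧ Captures ℓ J F B := by
  by_cases hcov : IsOmegaCover J (F ∪ eventuallyZero E)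
  · have hcard : #(F ∪ eventuallyZero E : Set (ℕ → E)) < 2 ^ ℵ₀ :=
      (Cardinal.mk_union_le _ _).trans_lt <| Cardinal.add_lt_of_lt (Cardinal.cantor ℵ₀).le hF <|
        countable_eventuallyZero.le_aleph0.trans_lt (Cardinal.cantor ℵ₀)
    obtain ⟨D, hDJ, hD⟩ :=
      isGammaSet_iff_exists_isGammaSeq.1 (hp.isGammaSet_of_mk_lt hcard) J hJ hcov
    obtain ⟨B, hBA, hB, φ, hφ, hDB⟩ := exists_infinite_subset_isGammaSeq_almostSupported hℓ
      (fun n ↦ hJ _ (hDJ n)) (fun z hz ↦ hD z (Or.inr hz)) hA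
    refine ⟨B, hBA, hB, fun _ ↦ ⟨D ∘ φ, fun n ↦ hDJ _, ?_⟩⟩
    rintro z (hz | hz)
    · exact hφ.eventually (hD z (Or.inl hz))
    · exact hDB z hz
  · exact ⟨A, subset_rfl, hA, fun h ↦ absurd h hcov⟩

lemma exists_tower (hp : PseudoIntersectionNumberEqContinuum) (hℓ : Tendsto ℓ atTop atTop)
    {T : Type} [LinearOrder T] [WellFoundedLT T] (hT : ∀ t : T, #(Iio t) < 2 ^ ℵ₀)
    {J : T → Set (Set (ℕ → E))} (hJ : ∀ t, ∀ U ∈ J t, IsOpen U) (w : T → ℕ → E) :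
    ∃ A : T → Set ℕ, ∀ t, (A t).Infinite ∧ (∀ s < t, A t ⊆* A s) ∧
      Captures ℓ (J t) (range fun s : Iio t ↦ (ℓ ⁻¹' A s).indicator (w s)) (A t) := by
  obtain ⟨A, hA⟩ := exists_forall_of_exists_extension
    (fun t (A : Iio t → Set ℕ) B ↦ B.Infinite ∧ (∀ s, B ⊆* A s) ∧
      Captures ℓ (J t) (range fun s ↦ (ℓ ⁻¹' A s).indicator (w s)) B) fun t A ih ↦ by
    obtain ⟨B, hB, hBA⟩ := hp.exists_almostSubset (hT t) <|
      infinite_biInter_of_almostSubset (fun s ↦ (ih s).1) fun s r hsr ↦ (ih r).2.1 ⟨s, hsr⟩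
    obtain ⟨C, hCB, hC, hcap⟩ := hp.exists_infinite_subset_captures hℓ (hJ t)
      (Cardinal.mk_range_le.trans_lt (hT t)) hB
    exact ⟨C, hC, fun s ↦ (AlmostSubset.of_subset hCB).trans (hBA s), hcap⟩
  exact ⟨A, fun t ↦ ⟨(hA t).1, fun s hs ↦ (hA t).2.1 ⟨s, hs⟩, (hA t).2.2⟩⟩

lemma exists_isGammaSet_frequently_eqOn_block (hp : PseudoIntersectionNumberEqContinuum)
    (hℓ : Tendsto ℓ atTop atTop) :
    ∃ X : Set (ℕ → E), IsGammaSet X ∧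
      ∀ w : ℕ → E, ∃ x ∈ X, ∃ᶠ n in atTop, EqOn x w (ℓ ⁻¹' {n}) := by
  obtain ⟨V, hVc, hVo, hV⟩ := exists_countable_isOpen_isOmegaNetwork (ℕ → E)
  let T := (ℕ → E) × 𝒫 V
  obtain ⟨_, _, hord⟩ := Cardinal.exists_ord_eq_type_lt T
  obtain ⟨A, hA⟩ := hp.exists_tower hℓ
    (fun t : T ↦ (Cardinal.mk_Iio_lt t hord).trans_le (mk_sequences_prod_powerset_le E hVc))
    (fun t U hU ↦ hVo U (t.2.2 hU)) Prod.fst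
  let x (t : T) : ℕ → E := (ℓ ⁻¹' A t).indicator t.1
  refine ⟨range x ∪ eventuallyZero E, hV.isGammaSet fun J hJV hcov ↦ ?_, fun w ↦ ?_⟩
  · let t : T := (0, ⟨J, hJV⟩)
    have hxt : range (fun s : Iio t ↦ x s) ⊆ range x := range_comp_subset_range _ x
    obtain ⟨D, hDJ, hD⟩ := (hA t).2.2 fun F hF ↦
      hcov F (hF.trans (union_subset_union_left _ hxt))
    refine ⟨D, hDJ, fun z hz ↦ hD z ?_⟩
    obtain ⟨s, rfl⟩ | hz := hz
    · obtain h | rfl | h := lt_trichotomy s t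
      · exact Or.inl ⟨⟨s, h⟩, rfl⟩
      · exact Or.inr (indicator_mem_almostSupported _ (.of_subset subset_rfl))
      · exact Or.inr (indicator_mem_almostSupported _ ((hA s).2.1 t h))
    · exact Or.inr (eventuallyZero_subset_almostSupported hz)
  · let t : T := (w, ⟨∅, empty_subset _⟩)
    refine ⟨x t, Or.inl ⟨t, rfl⟩, (Nat.frequently_atTop_iff_infinite.2 (hA t).1).mono ?_⟩
    rintro _ hn i rfl
    exact indicator_of_mem (show i ∈ ℓ ⁻¹' A t from hn) w

lemma exists_isGammaSet_frequently_eqOn_Ico_sq (hp : PseudoIntersectionNumberEqContinuum) :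
    ∃ X : Set (ℕ → E), IsGammaSet X ∧
      ∀ w : ℕ → E, ∃ x ∈ X, ∃ᶠ k in atTop, EqOn x w (Ico k (k ^ 2)) := by
  have hlog : Tendsto (Nat.log 2) atTop atTop := tendsto_atTop.2 fun n ↦
    (eventually_ge_atTop (2 ^ n)).mono fun _ hi ↦ Nat.le_log_of_pow_le one_lt_two hi
  -- The fibre of `log₂ ∘ log₂` over `n` contains `[k, k²)` for `k = 2 ^ 2 ^ n`.
  obtain ⟨X, hX, hagree⟩ := hp.exists_isGammaSet_frequently_eqOn_block (E := E) (hlog.comp hlog)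
  refine ⟨X, hX, fun w ↦ ?_⟩
  obtain ⟨x, hxX, hx⟩ := hagree w
  have hpow : Tendsto (fun n : ℕ ↦ 2 ^ n) atTop atTop :=
    tendsto_pow_atTop_atTop_of_one_lt one_lt_two
  refine ⟨x, hxX, (hpow.comp hpow).frequently (hx.mono fun n hn ↦ hn.mono ?_)⟩
  rintro i ⟨hi, hi'⟩
  have hi'' : i < 2 ^ 2 ^ (n + 1) := by rwa [pow_succ 2 n, pow_mul]
  exact Nat.log_eq_of_pow_le_of_lt_pow (Nat.le_log_of_pow_le one_lt_two hi)
    (Nat.log_lt_of_lt_pow ((Nat.two_pow_pos _).trans_le hi).ne' hi'')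

end PseudoIntersectionNumberEqContinuum

section Digits

variable {b : ℕ}

lemma exists_sum_ofDigitsTerm_eq_div (x : ℕ → Fin b) (k : ℕ) :
    ∃ m : ℤ, ∑ i ∈ Finset.range k, Real.ofDigitsTerm x i = m / (b : ℝ) ^ k := by
  have hb : (b : ℝ) ≠ 0 := Nat.cast_ne_zero.2 (x 0).pos.ne'
  induction k with
  | zero => exact ⟨0, by simp⟩
  | succ k ih =>
    obtain ⟨m, hm⟩ := ih
    refine ⟨b * m + x k, ?_⟩
    rw [Finset.sum_range_succ, hm, Real.ofDigitsTerm]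
    push_cast
    field_simp
    ring

lemma exists_abs_ofDigits_sub_ofDigits_sub_div_le {x y : ℕ → Fin b} {k l : ℕ} (hkl : k ≤ l)
    (hxy : EqOn x y (Ico k l)) :
    ∃ m : ℤ, |Real.ofDigits x - Real.ofDigits y - m / (b : ℝ) ^ k| ≤ ((b : ℝ) ^ l)⁻¹ := by
  obtain ⟨p, hp⟩ := exists_sum_ofDigitsTerm_eq_div x k
  obtain ⟨q, hq⟩ := exists_sum_ofDigitsTerm_eq_div y k
  have htail := Real.abs_ofDigits_sub_ofDigits_le (x := fun i ↦ x (i + k))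
    (y := fun i ↦ y (i + k)) (n := l - k) fun i hi ↦ hxy ⟨by omega, by omega⟩
  have hsub : Real.ofDigits x - Real.ofDigits y - (p - q : ℤ) / (b : ℝ) ^ k = ((b : ℝ) ^ k)⁻¹ *
      (Real.ofDigits (fun i ↦ x (i + k)) - Real.ofDigits fun i ↦ y (i + k)) := by
    rw [Real.ofDigits_eq_sum_add_ofDigits x k, Real.ofDigits_eq_sum_add_ofDigits y k, hp, hq]
    push_cast
    ring
  refine ⟨p - q, ?_⟩
  calc |Real.ofDigits x - Real.ofDigits y - (p - q : ℤ) / (b : ℝ) ^ k|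
      = ((b : ℝ) ^ k)⁻¹ *
          |Real.ofDigits (fun i ↦ x (i + k)) - Real.ofDigits fun i ↦ y (i + k)| := by
        rw [hsub, abs_mul, abs_of_nonneg (by positivity)]
    _ ≤ ((b : ℝ) ^ k)⁻¹ * ((b : ℝ) ^ (l - k))⁻¹ := by gcongr
    _ = ((b : ℝ) ^ l)⁻¹ := by rw [← mul_inv, ← pow_add, Nat.add_sub_cancel' hkl]

lemma liouville_ofDigits_sub_ofDigits (hb : 1 < b) {x y : ℕ → Fin b}
    (hxy : ∃ᶠ k in atTop, EqOn x y (Ico k (k ^ 2)))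
    (hirr : Irrational (Real.ofDigits x - Real.ofDigits y)) :
    Liouville (Real.ofDigits x - Real.ofDigits y) := by
  intro n
  obtain ⟨k, hk, hnk⟩ := (hxy.and_eventually (eventually_gt_atTop n)).exists
  obtain ⟨m, hm⟩ := exists_abs_ofDigits_sub_ofDigits_sub_div_le (Nat.le_self_pow two_ne_zero k) hk
  refine ⟨m, (b ^ k : ℕ), by exact_mod_cast Nat.one_lt_pow (by omega) hb, ?_, ?_⟩
  · exact_mod_cast hirr.ne_rat (m / (b ^ k : ℕ))
  · calc |Real.ofDigits x - Real.ofDigits y - m / ((b ^ k : ℕ) : ℤ)|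
        ≤ ((b : ℝ) ^ k ^ 2)⁻¹ := by simpa using hm
      _ < ((b : ℝ) ^ (k * n))⁻¹ := by
        gcongr
        · exact_mod_cast hb
        · rw [sq]
          gcongr
          omega
      _ = 1 / (((b ^ k : ℕ) : ℤ) : ℝ) ^ n := by simp [pow_mul]

end Digits

lemma liouville_add_intCast {x : ℝ} (hx : Liouville x) (m : ℤ) : Liouville (x + m) :=
  forall_liouvilleWith_iff.1 fun p ↦ (forall_liouvilleWith_iff.2 hx p).add_int m

lemma volume_setOfPred_liouville_union_Qreal : volume ({x | Liouville x} ∪ Qreal) = 0 :=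
  measure_union_null volume_setOfPred_liouville
    ((countable_range ((↑) : ℚ → ℝ)).measure_zero volume)

lemma image_ofDigits_add_setOfPred_liouville_union_Qreal {b : ℕ} (hb : 1 < b) {X : Set (ℕ → Fin b)}
    (hX : ∀ w : ℕ → Fin b, ∃ x ∈ X, ∃ᶠ k in atTop, EqOn x w (Ico k (k ^ 2))) :
    Real.ofDigits '' X + ({x | Liouville x} ∪ Qreal) = univ := by
  refine eq_univ_of_forall fun r ↦ ?_
  obtain ⟨w, -, hw⟩ := Real.ofDigits_SurjOn hb ⟨Int.fract_nonneg r, (Int.fract_lt_one r).le⟩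
  obtain ⟨x, hxX, hxw⟩ := hX w
  refine ⟨_, mem_image_of_mem _ hxX, r - Real.ofDigits x, ?_, add_sub_cancel _ r⟩
  by_cases hirr : Irrational (r - Real.ofDigits x)
  · have hr : r - Real.ofDigits x = Real.ofDigits w - Real.ofDigits x + ⌊r⌋ := by
      linarith [Int.floor_add_fract r]
    rw [hr, irrational_add_intCast_iff] at hirr
    rw [hr]
    exact Or.inl <| liouville_add_intCast
      (liouville_ofDigits_sub_ofDigits hb (hxw.mono fun k hk ↦ hk.symm) hirr) _
  · exact Or.inr (by simpa [Irrational, Qreal] using hirr)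

/-- Assume `𝔭 = 2^{ℵ₀}`. Then there is a γ-set `Y ⊆ ℝ` which is not strongly meager:
there is a Lebesgue-null set `G' ⊆ ℝ` with `Y + G' = ℝ`. -/
theorem real_gammaSet_not_stronglyMeager_of_p_eq_continuum
    (hp : PseudoIntersectionNumberEqContinuum) :
    ∃ Y : Set ℝ, IsGammaSet Y ∧
      ∃ G' : Set ℝ, volume G' = 0 ∧ Y + G' = Set.univ := by
  obtain ⟨X, hX, hagree⟩ := hp.exists_isGammaSet_frequently_eqOn_Ico_sq (E := Fin 2)
  exact ⟨Real.ofDigits '' X, hX.image Real.continuous_ofDigits, {x | Liouville x} ∪ Qreal,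
    volume_setOfPred_liouville_union_Qreal,
    image_ofDigits_add_setOfPred_liouville_union_Qreal one_lt_two hagree⟩
end
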